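/- Let K be a tetrahedron in ℝ³ and k ∈ {1,2}. A function v ∈ W_k(K) := ∇P_{k+1}(K) ⊕ x × P₁(K;ℝ³) ⊕ b_K·P₁(K;ℝ³) is uniquely determined by the following 10k + 22 degrees of freedom: the edge moments ∫_e (v·t) q ds for all q ∈ P_k(e) and every edge e of K; the face moments ∫_F (v × n)·q dS for all q ∈ RM_{k−2}(F) and every face F of K; and the face moments ∫_F (curl v × n)·q dS for all q ∈ RT(F) and every face F of K. That is, if all these functionals vanish on v then v = 0. -/

import Mathlib

open MeasureTheory
open scoped Classical

noncomputable section

/-! ### Basic vector calculus on ℝ³ -/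

abbrev Vec : Type := Fin 3 → ℝ
abbrev Mat : Type := Fin 3 → Fin 3 → ℝ

/-- Euclidean dot product on ℝ³. -/
def dot3 (v w : Vec) : ℝ := ∑ i, v i * w i
/-- squared Euclidean norm. -/
def nsq3 (v : Vec) : ℝ := dot3 v v
/-- Euclidean norm. -/
def enorm3 (v : Vec) : ℝ := Real.sqrt (dot3 v v)
/-- normalization to a unit vector. -/
def normalize3 (v : Vec) : Vec := (enorm3 v)⁻¹ • v
/-- cross product on ℝ³. -/
def cross3 (v w : Vec) : Vec :=
  ![v 1 * w 2 - v 2 * w 1, v 2 * w 0 - v 0 * w 2, v 0 * w 1 - v 1 * w 0]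
/-- Frobenius inner product of 3×3 matrices. -/
def dotM (A B : Mat) : ℝ := ∑ i, ∑ j, A i j * B i j
/-- squared Frobenius norm. -/
def nsqM (A : Mat) : ℝ := dotM A A

/-- partial derivative ∂ᵢ of a scalar field. -/
def pd (i : Fin 3) (f : Vec → ℝ) (x : Vec) : ℝ := fderiv ℝ f x (Pi.single i 1)
/-- gradient of a scalar field. -/
def grad3 (f : Vec → ℝ) (x : Vec) : Vec := fun i => pd i f x
/-- curl of a vector field. -/
def curl3 (v : Vec → Vec) (x : Vec) : Vec :=
  ![pd 1 (fun y => v y 2) x - pd 2 (fun y => v y 1) x,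
    pd 2 (fun y => v y 0) x - pd 0 (fun y => v y 2) x,
    pd 0 (fun y => v y 1) x - pd 1 (fun y => v y 0) x]
/-- divergence of a vector field. -/
def div3 (v : Vec → Vec) (x : Vec) : ℝ := ∑ i, pd i (fun y => v y i) x
/-- Jacobian matrix of a vector field. -/
def jac3 (v : Vec → Vec) (x : Vec) : Mat := fun i j => pd j (fun y => v y i) x
/-- application of a matrix to a vector (e.g. normal derivative ∂ₙ). -/
def japply (J : Mat) (n : Vec) : Vec := fun i => ∑ j, J i j * n j

/-- iterated partial derivatives along a list of directions. -/
def pdIter : List (Fin 3) → (Vec → ℝ) → Vec → ℝ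
  | [], f => f
  | i :: l, f => pd i (pdIter l f)

/-- `f` is (the function of) a polynomial of total degree at most `k`. -/
def PolyDeg (k : ℕ) (f : Vec → ℝ) : Prop :=
  ∃ p : MvPolynomial (Fin 3) ℝ, p.totalDegree ≤ k ∧ ∀ x, f x = MvPolynomial.eval x p
/-- vector-valued polynomial of total degree at most `k`. -/
def VPolyDeg (k : ℕ) (v : Vec → Vec) : Prop := ∀ i, PolyDeg k fun x => v x i

/-! ### Tetrahedra -/

/-- A (nondegenerate) tetrahedron in ℝ³, given by its four vertices. -/
structure Tetra where
  vtx : Fin 4 → Vec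
  indep : AffineIndependent ℝ vtx

namespace Tetra

/-- the tetrahedron as a closed subset of ℝ³. -/
def K (T : Tetra) : Set Vec := convexHull ℝ (Set.range T.vtx)
/-- the edge joining vertices `i`, `j`. -/
def edge (T : Tetra) (i j : Fin 4) : Set Vec := segment ℝ (T.vtx i) (T.vtx j)
/-- a unit tangent vector of the edge joining vertices `i`, `j`. -/
def tangent (T : Tetra) (i j : Fin 4) : Vec := normalize3 (T.vtx j - T.vtx i)
/-- the face opposite to vertex `i`. -/
def face (T : Tetra) (i : Fin 4) : Set Vec := convexHull ℝ (T.vtx '' {j | j ≠ i})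
/-- unit outward normal of the face opposite to vertex `i`. -/
def outNormal (T : Tetra) (i : Fin 4) : Vec :=
  let a := T.vtx (i.succAbove 0)
  let u := cross3 (T.vtx (i.succAbove 1) - a) (T.vtx (i.succAbove 2) - a)
  (if 0 < dot3 u (T.vtx i - a) then (-1 : ℝ) else 1) • normalize3 u

/-- `lam` is the family of barycentric coordinates of `T`. -/
def IsBary (T : Tetra) (lam : Fin 4 → Vec → ℝ) : Prop :=
  (∀ i, PolyDeg 1 (lam i)) ∧ ∀ i j, lam i (T.vtx j) = if i = j then (1 : ℝ) else 0
/-- `b` is the (quartic) bubble function of `T`. -/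
def IsBubble (T : Tetra) (b : Vec → ℝ) : Prop :=
  ∃ lam, T.IsBary lam ∧ ∀ x, b x = ∏ i, lam i x

end Tetra

/-! ### Local shape function spaces -/

/-- the local space `W_k(K) = ∇P_{k+1}(K) ⊕ x × P₁(K;ℝ³) ⊕ b_K P₁(K;ℝ³)`. -/
def MemW (k : ℕ) (T : Tetra) (v : Vec → Vec) : Prop :=
  ∃ (q : Vec → ℝ) (p r : Vec → Vec) (b : Vec → ℝ), T.IsBubble b ∧
    PolyDeg (k + 1) q ∧ VPolyDeg 1 p ∧ VPolyDeg 1 r ∧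
    ∀ x, v x = grad3 q x + cross3 x (p x) + b x • r x

/-- the local Tai–Winther space `V^d(K) = P₁(K;ℝ³) ⊕ curl(b_K P₁(K;ℝ³))`. -/
def MemVd (T : Tetra) (v : Vec → Vec) : Prop :=
  ∃ (p r : Vec → Vec) (b : Vec → ℝ), T.IsBubble b ∧ VPolyDeg 1 p ∧ VPolyDeg 1 r ∧
    ∀ x, v x = p x + curl3 (fun y => b y • r y) x

/-- the local Nédélec space `V_k^{ND}(K) = ∇P_{k+1}(K) ⊕ x × P₁(K;ℝ³)`, `k = 1,2`. -/
def MemND (k : ℕ) (v : Vec → Vec) : Prop :=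
  ∃ (q : Vec → ℝ) (p : Vec → Vec), PolyDeg (k + 1) q ∧ VPolyDeg 1 p ∧
    ∀ x, v x = grad3 q x + cross3 x (p x)

/-- the face test space `RM_{k-2}(F) = P₀(F;ℝ²) ⊕ x^⊥ P_{k-2}(F)` on the face with
unit normal `n`; for `k = 1` this is just `P₀(F;ℝ²)`. -/
def MemRM (k : ℕ) (n : Vec) (q : Vec → Vec) : Prop :=
  ∃ (a : Vec) (c : ℝ), dot3 a n = 0 ∧ (k ≤ 1 → c = 0) ∧ ∀ x, q x = a + c • cross3 n x

/-- the face test space `RT(F) = P₀(F;ℝ²) ⊕ x P₀(F)` on the face with unit normal `n`. -/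
def MemRT (n : Vec) (q : Vec → Vec) : Prop :=
  ∃ (a : Vec) (c : ℝ), dot3 a n = 0 ∧ ∀ x, q x = a + c • (x - dot3 x n • n)

/-! ### Degrees of freedom -/

/-- edge moment `∫_e (v⋅t) q ds`. -/
def edgeMoment (T : Tetra) (a b : Fin 4) (v : Vec → Vec) (q : Vec → ℝ) : ℝ :=
  ∫ x in T.edge a b, dot3 (v x) (T.tangent a b) * q x ∂μH[1]
/-- tangential face moment `∫_F (v × n)⋅q dS`. -/
def faceTanMoment (T : Tetra) (a : Fin 4) (v : Vec → Vec) (q : Vec → Vec) : ℝ :=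
  ∫ x in T.face a, dot3 (cross3 (v x) (T.outNormal a)) (q x) ∂μH[2]
/-- normal face moment `∫_F (v⋅n) q dS`. -/
def faceNorMoment (T : Tetra) (a : Fin 4) (v : Vec → Vec) (q : Vec → ℝ) : ℝ :=
  ∫ x in T.face a, dot3 (v x) (T.outNormal a) * q x ∂μH[2]
/-- surface integral over a face. -/
def faceInt2 (T : Tetra) (a : Fin 4) (g : Vec → ℝ) : ℝ := ∫ x in T.face a, g x ∂μH[2]
/-- diameter of a face. -/
def hF (T : Tetra) (a : Fin 4) : ℝ := Metric.diam (T.face a)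

/-! ### Meshes -/

/-- A face-to-face tetrahedral mesh. -/
structure Mesh where
  n : ℕ
  npos : 0 < n
  el : Fin n → Tetra
  disj : ∀ i j, i ≠ j → interior (el i).K ∩ interior (el j).K = ∅
  conform : ∀ i j, i ≠ j → ∃ s e : Set (Fin 4),
    (el i).vtx '' s = (el j).vtx '' e ∧ (el i).K ∩ (el j).K = convexHull ℝ ((el i).vtx '' s)

namespace Mesh
/-- the open domain triangulated by the mesh. -/
def domain (M : Mesh) : Set Vec := interior (⋃ i, (M.el i).K)
/-- the mesh triangulates the (connected, polyhedral) domain `Ω`. -/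
def Covers (M : Mesh) (Ω : Set Vec) : Prop :=
  Ω = M.domain ∧ closure Ω = (⋃ i, (M.el i).K) ∧ IsConnected Ω
/-- the mesh size `h`. -/
def hsize (M : Mesh) : ℝ := ⨆ i, Metric.diam (M.el i).K
/-- shape regularity with constant `ρ`. -/
def ShapeReg (ρ : ℝ) (M : Mesh) : Prop :=
  ∀ i, ∃ x, Metric.ball x (ρ * Metric.diam (M.el i).K) ⊆ (M.el i).K
end Mesh

/-- A bounded polyhedral domain: a connected open set triangulated by some tetrahedral mesh. -/
def PolyhedralDomain (Ω : Set Vec) : Prop := ∃ M : Mesh, M.Covers Ω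

/-- piecewise vector fields on a mesh (one smooth representative per element). -/
abbrev DiscVF (M : Mesh) := Fin M.n → Vec → Vec
/-- piecewise scalar fields on a mesh. -/
abbrev DiscSF (M : Mesh) := Fin M.n → Vec → ℝ

/-- elementwise average (the `L²`-projection onto piecewise constants). -/
def avg (M : Mesh) (g : Vec → ℝ) (i : Fin M.n) : ℝ :=
  (∫ x in (M.el i).K, g x) / (volume (M.el i).K).toReal

/-! ### Global finite element spaces -/

/-- the `H(grad curl)`-nonconforming space `W_h`: piecewise `W_k(K)`, all DoFs
single-valued, and the edge DoFs and `RM`-face DoFs vanishing on `∂Ω`. -/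
def MemWh (k : ℕ) (M : Mesh) (Ω : Set Vec) (u : DiscVF M) : Prop :=
  (∀ i, MemW k (M.el i) (u i)) ∧
  (∀ i j a b c d, i ≠ j → (M.el i).edge a b = (M.el j).edge c d →
     ∀ q, PolyDeg k q → edgeMoment (M.el i) a b (u i) q = edgeMoment (M.el i) a b (u j) q) ∧
  (∀ i j a b, i ≠ j → (M.el i).face a = (M.el j).face b →
     ∀ q, MemRM k ((M.el i).outNormal a) q →
       faceTanMoment (M.el i) a (u i) q = faceTanMoment (M.el i) a (u j) q) ∧
  (∀ i j a b, i ≠ j → (M.el i).face a = (M.el j).face b →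
     ∀ q, MemRT ((M.el i).outNormal a) q →
       faceTanMoment (M.el i) a (curl3 (u i)) q = faceTanMoment (M.el i) a (curl3 (u j)) q) ∧
  (∀ i a b, (M.el i).edge a b ⊆ frontier Ω →
     ∀ q, PolyDeg k q → edgeMoment (M.el i) a b (u i) q = 0) ∧
  (∀ i a, (M.el i).face a ⊆ frontier Ω →
     ∀ q, MemRM k ((M.el i).outNormal a) q → faceTanMoment (M.el i) a (u i) q = 0)

/-- the space `W_{h0}`: all DoFs, including the curl-trace face DoFs, vanish on `∂Ω`. -/
def MemWh0 (k : ℕ) (M : Mesh) (Ω : Set Vec) (u : DiscVF M) : Prop :=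
  MemWh k M Ω u ∧
  ∀ i a, (M.el i).face a ⊆ frontier Ω →
    ∀ q, MemRT ((M.el i).outNormal a) q → faceTanMoment (M.el i) a (curl3 (u i)) q = 0

/-- the degree-`(k+1)` Lagrange space with zero boundary trace. -/
def MemVhg (k : ℕ) (M : Mesh) (Ω : Set Vec) (u : DiscSF M) : Prop :=
  (∀ i, PolyDeg (k + 1) (u i)) ∧
  (∀ i j, ∀ x ∈ (M.el i).K ∩ (M.el j).K, u i x = u j x) ∧
  (∀ i, ∀ x ∈ (M.el i).K ∩ frontier Ω, u i x = 0)

/-- the Tai–Winther space `V_h^d`: normal components continuous, tangential `RT`-moments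
single-valued, normal DoFs vanishing on `∂Ω`. -/
def MemVhd (M : Mesh) (Ω : Set Vec) (u : DiscVF M) : Prop :=
  (∀ i, MemVd (M.el i) (u i)) ∧
  (∀ i j a b, i ≠ j → (M.el i).face a = (M.el j).face b →
     (∀ q, PolyDeg 1 q → faceNorMoment (M.el i) a (u i) q = faceNorMoment (M.el i) a (u j) q) ∧
     (∀ q, MemRT ((M.el i).outNormal a) q →
       faceTanMoment (M.el i) a (u i) q = faceTanMoment (M.el i) a (u j) q)) ∧
  (∀ i a, (M.el i).face a ⊆ frontier Ω →
     ∀ q, PolyDeg 1 q → faceNorMoment (M.el i) a (u i) q = 0)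

/-- the Tai–Winther space `V_{h0}^d` with all DoFs vanishing on `∂Ω`. -/
def MemVh0d (M : Mesh) (Ω : Set Vec) (u : DiscVF M) : Prop :=
  MemVhd M Ω u ∧
  ∀ i a, (M.el i).face a ⊆ frontier Ω →
    ∀ q, MemRT ((M.el i).outNormal a) q → faceTanMoment (M.el i) a (u i) q = 0

/-- the piecewise-constant space `𝒬_h` with zero mean. -/
def MemQh (M : Mesh) (q : Fin M.n → ℝ) : Prop :=
  ∑ i, q i * (volume (M.el i).K).toReal = 0

/-- the Nédélec space with vanishing tangential boundary DoFs. -/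
def MemVND (k : ℕ) (M : Mesh) (Ω : Set Vec) (u : DiscVF M) : Prop :=
  (∀ i, MemND k (u i)) ∧
  (∀ i j a b c d, i ≠ j → (M.el i).edge a b = (M.el j).edge c d →
     ∀ q, PolyDeg k q → edgeMoment (M.el i) a b (u i) q = edgeMoment (M.el i) a b (u j) q) ∧
  (∀ i j a b, i ≠ j → (M.el i).face a = (M.el j).face b →
     ∀ q, MemRM k ((M.el i).outNormal a) q →
       faceTanMoment (M.el i) a (u i) q = faceTanMoment (M.el i) a (u j) q) ∧
  (∀ i a b, (M.el i).edge a b ⊆ frontier Ω →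
     ∀ q, PolyDeg k q → edgeMoment (M.el i) a b (u i) q = 0) ∧
  (∀ i a, (M.el i).face a ⊆ frontier Ω →
     ∀ q, MemRM k ((M.el i).outNormal a) q → faceTanMoment (M.el i) a (u i) q = 0)

/-- the lowest-order BDM space with vanishing normal boundary trace. -/
def MemVBDM (M : Mesh) (Ω : Set Vec) (u : DiscVF M) : Prop :=
  (∀ i, VPolyDeg 1 (u i)) ∧
  (∀ i j a b, i ≠ j → (M.el i).face a = (M.el j).face b →
     ∀ x ∈ (M.el i).face a, dot3 (u i x) ((M.el i).outNormal a) = dot3 (u j x) ((M.el i).outNormal a)) ∧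
  (∀ i a, (M.el i).face a ⊆ frontier Ω →
     ∀ x ∈ (M.el i).face a, dot3 (u i x) ((M.el i).outNormal a) = 0)

/-! ### Discrete norms and bilinear forms -/

/-- broken `L²` norm of a piecewise vector field. -/
def L2d (M : Mesh) (w : DiscVF M) : ℝ :=
  Real.sqrt (∑ i, ∫ x in (M.el i).K, nsq3 (w i x))
/-- `L²` norm of the (elementwise) curl. -/
def L2curl (M : Mesh) (w : DiscVF M) : ℝ :=
  Real.sqrt (∑ i, ∫ x in (M.el i).K, nsq3 (curl3 (w i) x))
/-- broken `H¹` seminorm of the curl, `|curl v|_{1,h}`. -/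
def semiCurl (M : Mesh) (w : DiscVF M) : ℝ :=
  Real.sqrt (∑ i, ∫ x in (M.el i).K, nsqM (jac3 (curl3 (w i)) x))
/-- the norm `‖v‖_{ε,h}`. -/
def epsNorm (ε : ℝ) (M : Mesh) (w : DiscVF M) : ℝ :=
  Real.sqrt ((L2d M w) ^ 2 + (L2curl M w) ^ 2 + ε ^ 2 * (semiCurl M w) ^ 2)
/-- broken `H¹` seminorm of a piecewise scalar field. -/
def semiGrad (M : Mesh) (μ : DiscSF M) : ℝ :=
  Real.sqrt (∑ i, ∫ x in (M.el i).K, nsq3 (grad3 (μ i) x))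

/-- `a_h(w,v) = Σ_K (∇curl w, ∇curl v)_K`. -/
def ah (M : Mesh) (w v : DiscVF M) : ℝ :=
  ∑ i, ∫ x in (M.el i).K, dotM (jac3 (curl3 (w i)) x) (jac3 (curl3 (v i)) x)
/-- `b(w,v) = (curl w, curl v)`. -/
def bh (M : Mesh) (w v : DiscVF M) : ℝ :=
  ∑ i, ∫ x in (M.el i).K, dot3 (curl3 (w i) x) (curl3 (v i) x)
/-- `c(v,μ) = (v, ∇μ)`. -/
def ch (M : Mesh) (v : DiscVF M) (μ : DiscSF M) : ℝ :=
  ∑ i, ∫ x in (M.el i).K, dot3 (v i x) (grad3 (μ i) x)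
/-- load functional `(f, v)`. -/
def fpair (M : Mesh) (f : Vec → Vec) (v : DiscVF M) : ℝ :=
  ∑ i, ∫ x in (M.el i).K, dot3 (f x) (v i x)

/-- `a_h(u, v_h)` with a continuous first argument, given by `J = ∇curl u`. -/
def ahC (M : Mesh) (J : Vec → Mat) (v : DiscVF M) : ℝ :=
  ∑ i, ∫ x in (M.el i).K, dotM (J x) (jac3 (curl3 (v i)) x)
/-- `b(u, v_h)` with a continuous first argument, given by `cu = curl u`. -/
def bhC (M : Mesh) (cu : Vec → Vec) (v : DiscVF M) : ℝ :=
  ∑ i, ∫ x in (M.el i).K, dot3 (cu x) (curl3 (v i) x)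

/-- broken `L²` distance between a function and a piecewise field. -/
def errL2 (M : Mesh) (v : Vec → Vec) (w : DiscVF M) : ℝ :=
  Real.sqrt (∑ i, ∫ x in (M.el i).K, nsq3 (v x - w i x))
/-- broken `L²` distance of curls, the first argument given by `cu = curl u`. -/
def errCurl (M : Mesh) (cu : Vec → Vec) (w : DiscVF M) : ℝ :=
  Real.sqrt (∑ i, ∫ x in (M.el i).K, nsq3 (cu x - curl3 (w i) x))
/-- broken `H¹` distance of curls, the first argument given by `J = ∇curl u`. -/
def errSemi (M : Mesh) (J : Vec → Mat) (w : DiscVF M) : ℝ :=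
  Real.sqrt (∑ i, ∫ x in (M.el i).K, nsqM (J x - jac3 (curl3 (w i)) x))
/-- error in the `‖·‖_{ε,h}` norm between `u` (with `curl u = cu`, `∇curl u = J`)
and a piecewise field `w`. -/
def errNorm (ε : ℝ) (M : Mesh) (u cu : Vec → Vec) (J : Vec → Mat) (w : DiscVF M) : ℝ :=
  Real.sqrt ((errL2 M u w) ^ 2 + (errCurl M cu w) ^ 2 + ε ^ 2 * (errSemi M J w) ^ 2)
/-- broken `H¹` distance between a function with Jacobian `J` and a piecewise field. -/
def errJac (M : Mesh) (J : Vec → Mat) (w : DiscVF M) : ℝ :=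
  Real.sqrt (∑ i, ∫ x in (M.el i).K, nsqM (J x - jac3 (w i) x))

/-- sum of a quantity over the boundary faces of the mesh. -/
def bdrySum (M : Mesh) (Ω : Set Vec) (g : Fin M.n → Fin 4 → ℝ) : ℝ :=
  ∑ i, ∑ a, if (M.el i).face a ⊆ frontier Ω then g i a else 0

/-- the boundary part `ε² Σ_{F⊆∂Ω} h_F⁻¹ ‖curl v‖²_F` of the Nitsche norm. -/
def tripExtra (ε : ℝ) (M : Mesh) (Ω : Set Vec) (v : DiscVF M) : ℝ :=
  ε ^ 2 * bdrySum M Ω fun i a =>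
    (hF (M.el i) a)⁻¹ * faceInt2 (M.el i) a fun x => nsq3 (curl3 (v i) x)
/-- the Nitsche norm `|||v|||_{ε,h}`. -/
def tripNorm (ε : ℝ) (M : Mesh) (Ω : Set Vec) (v : DiscVF M) : ℝ :=
  Real.sqrt ((epsNorm ε M v) ^ 2 + tripExtra ε M Ω v)
/-- error in the Nitsche norm `|||·|||_{ε,h}`. -/
def errTrip (ε : ℝ) (M : Mesh) (Ω : Set Vec) (u cu : Vec → Vec) (J : Vec → Mat)
    (w : DiscVF M) : ℝ :=
  Real.sqrt ((errNorm ε M u cu J w) ^ 2 + ε ^ 2 * bdrySum M Ω fun i a =>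
    (hF (M.el i) a)⁻¹ * faceInt2 (M.el i) a fun x => nsq3 (cu x - curl3 (w i) x))

/-- the Nitsche bilinear form `ã_h` on discrete functions. -/
def atildeD (σ : ℝ) (M : Mesh) (Ω : Set Vec) (w v : DiscVF M) : ℝ :=
  ah M w v
  - bdrySum M Ω (fun i a => faceInt2 (M.el i) a fun x =>
      dot3 (japply (jac3 (curl3 (w i)) x) ((M.el i).outNormal a)) (curl3 (v i) x))
  - bdrySum M Ω (fun i a => faceInt2 (M.el i) a fun x =>
      dot3 (curl3 (w i) x) (japply (jac3 (curl3 (v i)) x) ((M.el i).outNormal a)))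
  + bdrySum M Ω (fun i a => (σ / hF (M.el i) a) * faceInt2 (M.el i) a fun x =>
      dot3 (curl3 (w i) x) (curl3 (v i) x))

/-- the Nitsche form `ã_h(u, v_h)` with continuous first argument `u`
(`cu = curl u`, `J = ∇curl u`). -/
def atildeC (σ : ℝ) (M : Mesh) (Ω : Set Vec) (cu : Vec → Vec) (J : Vec → Mat)
    (v : DiscVF M) : ℝ :=
  ahC M J v
  - bdrySum M Ω (fun i a => faceInt2 (M.el i) a fun x =>
      dot3 (japply (J x) ((M.el i).outNormal a)) (curl3 (v i) x))
  - bdrySum M Ω (fun i a => faceInt2 (M.el i) a fun x =>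
      dot3 (cu x) (japply (jac3 (curl3 (v i)) x) ((M.el i).outNormal a)))
  + bdrySum M Ω (fun i a => (σ / hF (M.el i) a) * faceInt2 (M.el i) a fun x =>
      dot3 (cu x) (curl3 (v i) x))
/-! ### Sobolev spaces via weak (distributional) derivatives -/

/-- smooth compactly supported scalar test functions on ℝ³. -/
def TestS (φ : Vec → ℝ) : Prop := ContDiff ℝ (⊤ : ℕ∞) φ ∧ HasCompactSupport φ
/-- smooth compactly supported vector test functions on ℝ³. -/
def TestV (φ : Vec → Vec) : Prop := ContDiff ℝ (⊤ : ℕ∞) φ ∧ HasCompactSupport φ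

/-- extension by zero outside `Ω`. -/
def zextS (Ω : Set Vec) (f : Vec → ℝ) : Vec → ℝ := Ω.indicator f
/-- extension by zero outside `Ω` (vector-valued). -/
def zextV (Ω : Set Vec) (v : Vec → Vec) : Vec → Vec := Ω.indicator v

/-- membership in `L²(Ω)`. -/
def MemL2S (Ω : Set Vec) (f : Vec → ℝ) : Prop := MemLp f 2 (volume.restrict Ω)
/-- membership in `L²(Ω;ℝ³)`. -/
def MemL2V (Ω : Set Vec) (v : Vec → Vec) : Prop := MemLp v 2 (volume.restrict Ω)

/-- `L²(Ω)` norm. -/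
def L2SΩ (Ω : Set Vec) (f : Vec → ℝ) : ℝ := Real.sqrt (∫ x in Ω, (f x) ^ 2)
/-- `L²(Ω;ℝ³)` norm. -/
def L2VΩ (Ω : Set Vec) (v : Vec → Vec) : ℝ := Real.sqrt (∫ x in Ω, nsq3 (v x))

/-- `g = ∂ᵢ f` in the sense of distributions on all of ℝ³. -/
def WkPD (i : Fin 3) (f g : Vec → ℝ) : Prop :=
  ∀ φ, TestS φ → ∫ x, g x * φ x = -∫ x, f x * pd i φ x
/-- `w = curl v` in the sense of distributions on all of ℝ³. -/
def WkCurlAll (v w : Vec → Vec) : Prop :=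
  ∀ φ, TestV φ → ∫ x, dot3 (w x) (φ x) = ∫ x, dot3 (v x) (curl3 φ x)
/-- `d = div v` in the sense of distributions on all of ℝ³. -/
def WkDivAll (v : Vec → Vec) (d : Vec → ℝ) : Prop :=
  ∀ φ, TestS φ → ∫ x, d x * φ x = -∫ x, dot3 (v x) (grad3 φ x)

/-- `g = ∂ᵢ f` in the sense of distributions on `Ω`. -/
def WkPDIn (Ω : Set Vec) (i : Fin 3) (f g : Vec → ℝ) : Prop :=
  ∀ φ, TestS φ → tsupport φ ⊆ Ω → ∫ x in Ω, g x * φ x = -∫ x in Ω, f x * pd i φ x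
/-- `J` is the distributional Jacobian of `v` on `Ω`. -/
def WkJacIn (Ω : Set Vec) (v : Vec → Vec) (J : Vec → Mat) : Prop :=
  ∀ a b, WkPDIn Ω b (fun x => v x a) fun x => J x a b
/-- `g = ∂^α f` (`α` a list of directions) in the sense of distributions on `Ω`. -/
def WkIterIn (Ω : Set Vec) (l : List (Fin 3)) (f g : Vec → ℝ) : Prop :=
  ∀ φ, TestS φ → tsupport φ ⊆ Ω →
    ∫ x in Ω, g x * φ x = (-1 : ℝ) ^ l.length * ∫ x in Ω, f x * pdIter l φ x
/-- `div v = 0` in the sense of distributions on `Ω`. -/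
def WkDivFree (Ω : Set Vec) (v : Vec → Vec) : Prop :=
  ∀ φ, TestS φ → tsupport φ ⊆ Ω → ∫ x in Ω, dot3 (v x) (grad3 φ x) = 0

/-- scalar `H₀¹(Ω)` (via zero extension), with weak gradient `g`. -/
def MemH01S (Ω : Set Vec) (f : Vec → ℝ) (g : Vec → Vec) : Prop :=
  MemL2S Ω f ∧ MemL2V Ω g ∧ ∀ i, WkPD i (zextS Ω f) fun x => zextV Ω g x i
/-- `H₀(curl,Ω)` (via zero extension), with weak curl `cv`. -/
def MemH0Curl (Ω : Set Vec) (v cv : Vec → Vec) : Prop :=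
  MemL2V Ω v ∧ MemL2V Ω cv ∧ WkCurlAll (zextV Ω v) (zextV Ω cv)
/-- `H₀(div,Ω)` (via zero extension), with weak divergence `d`. -/
def MemH0Div (Ω : Set Vec) (v : Vec → Vec) (d : Vec → ℝ) : Prop :=
  MemL2V Ω v ∧ MemL2S Ω d ∧ WkDivAll (zextV Ω v) (zextS Ω d)
/-- vector `H₀¹(Ω;ℝ³)` (via zero extension), with weak Jacobian `J`. -/
def MemH01V (Ω : Set Vec) (v : Vec → Vec) (J : Vec → Mat) : Prop :=
  MemL2V Ω v ∧ (∀ a b, MemL2S Ω fun x => J x a b) ∧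
    ∀ a b, WkPD b (zextS Ω fun x => v x a) (zextS Ω fun x => J x a b)
/-- `H₀(grad curl, Ω)`: `u ∈ H₀(curl)` with `curl u = cu ∈ H₀¹(Ω;ℝ³)`, `J = ∇cu`. -/
def MemH0GC (Ω : Set Vec) (u cu : Vec → Vec) (J : Vec → Mat) : Prop :=
  MemH0Curl Ω u cu ∧ MemH01V Ω cu J

/-- membership in `H^j(Ω)` componentwise via iterated distributional derivatives `D`,
indexed by multi-indices `α : Fin j → Fin 3` and components `c : Fin 3`. -/
def MemHiter (Ω : Set Vec) (j : ℕ) (v : Vec → Vec)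
    (D : (Fin j → Fin 3) → Fin 3 → Vec → ℝ) : Prop :=
  ∀ α c, WkIterIn Ω (List.ofFn α) (fun x => v x c) (D α c) ∧ MemL2S Ω (D α c)
/-- the `H^j(Ω)` seminorm built from the iterated derivatives `D`. -/
def semiIter (Ω : Set Vec) (j : ℕ) (D : (Fin j → Fin 3) → Fin 3 → Vec → ℝ) : ℝ :=
  Real.sqrt (∑ α : Fin j → Fin 3, ∑ c : Fin 3, ∫ x in Ω, (D α c x) ^ 2)
/-- the `H¹(Ω)` seminorm of a vector field with Jacobian `J`. -/
def semiJ (Ω : Set Vec) (J : Vec → Mat) : ℝ := Real.sqrt (∫ x in Ω, nsqM (J x))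

/-- the `H^s(Ω)` seminorm, `1 ≤ s ≤ 2`, of a vector field with Jacobian `J` and second
derivatives `D2`; for `1 < s < 2` the Sobolev–Slobodeckij seminorm of the gradient. -/
def semiHsVec (Ω : Set Vec) (s : ℝ) (J : Vec → Mat)
    (D2 : (Fin 2 → Fin 3) → Fin 3 → Vec → ℝ) : ℝ :=
  if s = 1 then semiJ Ω J
  else if s = 2 then semiIter Ω 2 D2
  else Real.sqrt (∑ a : Fin 3, ∑ b : Fin 3,
    ∫ x in Ω, ∫ y in Ω, (J x a b - J y a b) ^ 2 / dist x y ^ (3 + 2 * (s - 1)))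
/-- membership in `H^s(Ω;ℝ³)`, `1 ≤ s ≤ 2`, with data `(J, D2)`. -/
def MemHsVec (Ω : Set Vec) (s : ℝ) (v : Vec → Vec) (J : Vec → Mat)
    (D2 : (Fin 2 → Fin 3) → Fin 3 → Vec → ℝ) : Prop :=
  WkJacIn Ω v J ∧ (∀ a b, MemL2S Ω fun x => J x a b) ∧
  (s = 2 → MemHiter Ω 2 v D2) ∧
  (1 < s → s < 2 → ∀ a b, Integrable
    (fun p : Vec × Vec => (J p.1 a b - J p.2 a b) ^ 2 / dist p.1 p.2 ^ (3 + 2 * (s - 1)))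
    ((volume.restrict Ω).prod (volume.restrict Ω)))

/-! ### The continuous problems -/

/-- weak solution of the quad-curl singular perturbation problem
`ε² curl⁴u + curl²u = f`, `div u = 0`, `u × n = curl u = 0` on `∂Ω`
(mixed formulation with multiplier `λ = 0`): here `cu = curl u`, `J = ∇curl u`. -/
def IsQuadCurlSol (Ω : Set Vec) (ε : ℝ) (f u cu : Vec → Vec) (J : Vec → Mat) : Prop :=
  MemH0GC Ω u cu J ∧ WkDivFree Ω u ∧
  ∀ v cv Jv, MemH0GC Ω v cv Jv →
    ε ^ 2 * (∫ x in Ω, dotM (J x) (Jv x)) + (∫ x in Ω, dot3 (cu x) (cv x))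
      = ∫ x in Ω, dot3 (f x) (v x)

/-- weak solution of the reduced double curl problem
`curl²u₀ = f`, `div u₀ = 0`, `u₀ × n = 0` on `∂Ω`; here `cu0 = curl u₀`. -/
def IsReducedSol (Ω : Set Vec) (f u0 cu0 : Vec → Vec) : Prop :=
  MemH0Curl Ω u0 cu0 ∧ WkDivFree Ω u0 ∧
  ∀ v cv, MemH0Curl Ω v cv →
    (∫ x in Ω, dot3 (cu0 x) (cv x)) = ∫ x in Ω, dot3 (f x) (v x)

/-- the continuous mixed formulation: `u ∈ H₀(grad curl)`, `λ ∈ H₀¹`,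
`ε²a(u,v) + b(u,v) + c(v,λ) = (f,v)` and `c(u,μ) = 0`. -/
def MixedSol (Ω : Set Vec) (ε : ℝ) (f u cu : Vec → Vec) (J : Vec → Mat)
    (lam : Vec → ℝ) (glam : Vec → Vec) : Prop :=
  MemH0GC Ω u cu J ∧ MemH01S Ω lam glam ∧
  (∀ v cv Jv, MemH0GC Ω v cv Jv →
    ε ^ 2 * (∫ x in Ω, dotM (J x) (Jv x)) + (∫ x in Ω, dot3 (cu x) (cv x))
      + (∫ x in Ω, dot3 (v x) (glam x)) = ∫ x in Ω, dot3 (f x) (v x)) ∧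
  (∀ μ gμ, MemH01S Ω μ gμ → ∫ x in Ω, dot3 (u x) (gμ x) = 0)

/-! ### Discrete methods -/

/-- the mixed finite element method (4.1)-(4.2). -/
def DiscMixedSol (k : ℕ) (M : Mesh) (Ω : Set Vec) (ε : ℝ) (f : Vec → Vec)
    (u : DiscVF M) (lam : DiscSF M) : Prop :=
  MemWh0 k M Ω u ∧ MemVhg k M Ω lam ∧
  (∀ v, MemWh0 k M Ω v → ε ^ 2 * ah M u v + bh M u v + ch M v lam = fpair M f v) ∧
  (∀ μ, MemVhg k M Ω μ → ch M u μ = 0)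

/-- the Nitsche-modified mixed finite element method (5.1)-(5.2). -/
def DiscNitscheSol (k : ℕ) (M : Mesh) (Ω : Set Vec) (σ ε : ℝ) (f : Vec → Vec)
    (u : DiscVF M) (lam : DiscSF M) : Prop :=
  MemWh k M Ω u ∧ MemVhg k M Ω lam ∧
  (∀ v, MemWh k M Ω v →
    ε ^ 2 * atildeD σ M Ω u v + bh M u v + ch M v lam = fpair M f v) ∧
  (∀ μ, MemVhg k M Ω μ → ch M u μ = 0)

/-! ### Falk–Winther projections and derived interpolation operators -/

/-- The Falk–Winther local bounded commuting projections onto the Lagrange, Nédélec and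
BDM spaces, together with the properties used in the paper. `avg` plays the role of the
projection `Q_h` onto piecewise constants. -/
structure FW (k : ℕ) (M : Mesh) (Ω : Set Vec) where
  Ig : (Vec → ℝ) → DiscSF M
  IND : (Vec → Vec) → DiscVF M
  IBDM : (Vec → Vec) → DiscVF M
  mapsIg : ∀ v gv, MemH01S Ω v gv → MemVhg k M Ω (Ig v)
  mapsIND : ∀ v cv, MemH0Curl Ω v cv → MemVND k M Ω (IND v)
  mapsIBDM : ∀ v dv, MemH0Div Ω v dv → MemVBDM M Ω (IBDM v)
  zeroIBDM : ∀ i x, IBDM (fun _ => (0 : Vec)) i x = 0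
  comm_grad : ∀ v gv, MemH01S Ω v gv → ∀ i, ∀ x ∈ (M.el i).K, IND gv i x = grad3 (Ig v i) x
  comm_curl : ∀ v cv, MemH0Curl Ω v cv → ∀ i, ∀ x ∈ (M.el i).K, IBDM cv i x = curl3 (IND v i) x
  comm_div : ∀ v dv, MemH0Div Ω v dv → ∀ i, ∀ x ∈ (M.el i).K, div3 (IBDM v i) x = avg M dv i

/-- DoF-matching conditions defining the interpolations `I_{h0}^d`, `I_h^d` into the
Tai–Winther spaces relative to a given piecewise field `B` (namely `I_h^{BDM}v`): the
normal face DoFs match, and on interior faces the tangential DoFs match the face average. -/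
def MatchIdInt (M : Mesh) (B w : DiscVF M) : Prop :=
  (∀ i a, ∀ q, PolyDeg 1 q → faceNorMoment (M.el i) a (w i) q = faceNorMoment (M.el i) a (B i) q) ∧
  (∀ i j a b, i ≠ j → (M.el i).face a = (M.el j).face b →
    ∀ q, MemRT ((M.el i).outNormal a) q →
      faceTanMoment (M.el i) a (w i) q
        = (faceTanMoment (M.el i) a (B i) q + faceTanMoment (M.el i) a (B j) q) / 2)

/-- `w = I_{h0}^d v` where `B = I_h^{BDM} v`. -/
def IsId0 (M : Mesh) (Ω : Set Vec) (B w : DiscVF M) : Prop :=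
  MemVh0d M Ω w ∧ MatchIdInt M B w

/-- `w = I_h^d v` where `B = I_h^{BDM} v`: additionally the tangential DoFs on boundary
faces match those of `B`. -/
def IsId (M : Mesh) (Ω : Set Vec) (B w : DiscVF M) : Prop :=
  MemVhd M Ω w ∧ MatchIdInt M B w ∧
  ∀ i a, (M.el i).face a ⊆ frontier Ω →
    ∀ q, MemRT ((M.el i).outNormal a) q →
      faceTanMoment (M.el i) a (w i) q = faceTanMoment (M.el i) a (B i) q

/-- DoF-matching conditions defining `I_{h0}^{gc}`, `I_h^{gc}` relative to a given
piecewise field `N` (namely `I_h^{ND}v`). -/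
def MatchIgcInt (k : ℕ) (M : Mesh) (N w : DiscVF M) : Prop :=
  (∀ i a b, a ≠ b → ∀ q, PolyDeg k q →
     edgeMoment (M.el i) a b (w i) q = edgeMoment (M.el i) a b (N i) q) ∧
  (∀ i a, ∀ q, MemRM k ((M.el i).outNormal a) q →
     faceTanMoment (M.el i) a (w i) q = faceTanMoment (M.el i) a (N i) q) ∧
  (∀ i j a b, i ≠ j → (M.el i).face a = (M.el j).face b →
    ∀ q, MemRT ((M.el i).outNormal a) q →
      faceTanMoment (M.el i) a (curl3 (w i)) q
        = (faceTanMoment (M.el i) a (curl3 (N i)) q + faceTanMoment (M.el i) a (curl3 (N j)) q) / 2)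

/-- `w = I_{h0}^{gc} v` where `N = I_h^{ND} v`. -/
def IsIgc0 (k : ℕ) (M : Mesh) (Ω : Set Vec) (N w : DiscVF M) : Prop :=
  MemWh0 k M Ω w ∧ MatchIgcInt k M N w

/-- `w = I_h^{gc} v` where `N = I_h^{ND} v`. -/
def IsIgc (k : ℕ) (M : Mesh) (Ω : Set Vec) (N w : DiscVF M) : Prop :=
  MemWh k M Ω w ∧ MatchIgcInt k M N w ∧
  ∀ i a, (M.el i).face a ⊆ frontier Ω →
    ∀ q, MemRT ((M.el i).outNormal a) q →
      faceTanMoment (M.el i) a (curl3 (w i)) q = faceTanMoment (M.el i) a (curl3 (N i)) q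

/-- `B` maps `H₀(div,Ω)` into the BDM space. -/
def BDMmaps (M : Mesh) (Ω : Set Vec) (B : (Vec → Vec) → DiscVF M) : Prop :=
  ∀ v dv, MemH0Div Ω v dv → MemVBDM M Ω (B v)
/-- the Falk–Winther `L²`-bound `‖I_h^{BDM}v‖₀ ≲ ‖v‖₀ + h‖div v‖₀`. -/
def BDMbound (M : Mesh) (Ω : Set Vec) (B : (Vec → Vec) → DiscVF M) (C₀ : ℝ) : Prop :=
  ∀ v dv, MemH0Div Ω v dv → L2d M (B v) ≤ C₀ * (L2VΩ Ω v + M.hsize * L2SΩ Ω dv)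
/-- the elementwise Falk–Winther error estimates
`Σ_K h_K^{2(i-j)} |v - I_h^{BDM}v|²_{i,K} ≲ |v|_j²` for `i = 0,1`, `j = 1,2`. -/
def BDMest (M : Mesh) (Ω : Set Vec) (B : (Vec → Vec) → DiscVF M) (C₀ : ℝ) : Prop :=
  (∀ v dv Jv, MemH0Div Ω v dv → WkJacIn Ω v Jv →
     (∑ i, (Metric.diam (M.el i).K) ^ (-2 : ℝ) * ∫ x in (M.el i).K, nsq3 (v x - B v i x))
       + (∑ i, ∫ x in (M.el i).K, nsqM (Jv x - jac3 (B v i) x)) ≤ C₀ * (semiJ Ω Jv) ^ 2) ∧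
  (∀ v dv Jv D2, MemH0Div Ω v dv → WkJacIn Ω v Jv → MemHiter Ω 2 v D2 →
     (∑ i, (Metric.diam (M.el i).K) ^ (-4 : ℝ) * ∫ x in (M.el i).K, nsq3 (v x - B v i x))
       + (∑ i, (Metric.diam (M.el i).K) ^ (-2 : ℝ) * ∫ x in (M.el i).K, nsqM (Jv x - jac3 (B v i) x))
       ≤ C₀ * (semiIter Ω 2 D2) ^ 2)

/-! ### Subspaces for the dimension count -/

/-- the subspace `∇P_{k+1}` of vector fields. -/
def gradSpace (k : ℕ) : Submodule ℝ (Vec → Vec) :=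
  Submodule.span ℝ {v | ∃ q, PolyDeg (k + 1) q ∧ v = fun x => grad3 q x}
/-- the subspace `x × P₁(ℝ³;ℝ³)`. -/
def crossSpace : Submodule ℝ (Vec → Vec) :=
  Submodule.span ℝ {v | ∃ p, VPolyDeg 1 p ∧ v = fun x => cross3 x (p x)}
/-- the subspace `b_K P₁(ℝ³;ℝ³)`. -/
def bubbleSpace (T : Tetra) : Submodule ℝ (Vec → Vec) :=
  Submodule.span ℝ {v | ∃ b r, T.IsBubble b ∧ VPolyDeg 1 r ∧ v = fun x => b x • r x}

/-!
Write `v = w + b_K r` with `w = ∇q + x × p`. Since `b_K` vanishes on `∂K`, the first two families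
of moments only see `w`. On an edge, `w · t` is itself a polynomial of degree `k`, so the edge
moments give `w · t = 0`; in particular `w` vanishes at the vertices. As `w` is quadratic, its
restriction to a face is then determined by the values of its polarisation at the three pairs of
vertices. The moments against constants leave one unknown per face, which vanishes by the moment
against the linear part of `RM` if `k = 2`, and by a cyclic identity for fields in
`∇P₂ ⊕ x × P₁` if `k = 1`. Hence `w = 0`.

On the face `F` opposite to vertex `a`, `curl (b_K r) = (∏_{m ≠ a} λ_m) ∇λ_a × r`, and `∇λ_a` is a
multiple of the normal. Testing with constants shows that the sum of `r` over the vertices of `F`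
is normal to `F`, and testing with `x - x_i` then gives `∑_{m ∈ F} r(x_m) · (x_m - x_i) = 0` for
every vertex `x_i` of `F`. Comparing these identities over the three faces through `x_i` yields
`r(x_a) · (x_a - x_i) = 0` for all `a` and `i`, so `r` vanishes at the vertices.
-/

section HausdorffIntegral

variable {E F : Type*} [NormedAddCommGroup E] [NormedSpace ℝ E] [FiniteDimensional ℝ E]
  [MeasurableSpace E] [BorelSpace E] [NormedAddCommGroup F] [NormedSpace ℝ F]
  [MeasurableSpace F] [BorelSpace F] (μ : Measure E) [μ.IsAddHaarMeasure]
  {φ : E →ᵃ[ℝ] F}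

theorem measurableEmbedding_of_injective_affineMap (hφ : Function.Injective φ) :
    MeasurableEmbedding φ := by
  have hlin : Topology.IsClosedEmbedding φ.linear :=
    LinearMap.isClosedEmbedding_of_injective
      (LinearMap.ker_eq_bot.2 (φ.linear_injective_iff.2 hφ))
  rw [φ.decomp]
  exact ((Homeomorph.addRight (φ 0)).isClosedEmbedding.comp hlin).measurableEmbedding

theorem exists_hausdorffMeasure_restrict_range_eq_smul_map (hφ : Function.Injective φ) :
    ∃ c : NNReal, c ≠ 0 ∧
      (μH[Module.finrank ℝ E]).restrict (Set.range φ) = c • μ.map φ := by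
  let e := LinearEquiv.ofInjective φ.linear (φ.linear_injective_iff.2 hφ)
  let L : E ≃L[ℝ] φ.linear.range := e.toContinuousLinearEquiv
  let j : φ.linear.range → F := fun y => y + φ 0
  have hj : Isometry j :=
    (IsometryEquiv.addRight (φ 0)).isometry.comp φ.linear.range.subtypeₗᵢ.isometry
  have hφj : j ∘ L = φ := φ.decomp.symm
  have hrange : Set.range φ = Set.range j := by rw [← hφj, L.surjective.range_comp]
  have : (μ.map L).IsAddHaarMeasure := L.isAddHaarMeasure_map μ
  have : (μH[Module.finrank ℝ E] : Measure φ.linear.range).IsAddHaarMeasure := by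
    rw [e.finrank_eq]; infer_instance
  refine ⟨_, (Measure.addHaarScalarFactor_pos_of_isAddHaarMeasure μH[Module.finrank ℝ E]
    (μ.map L)).ne', ?_⟩
  rw [hrange, ← hj.map_hausdorffMeasure (.inl (Nat.cast_nonneg _)), ← hφj,
    ← Measure.map_map hj.continuous.measurable L.continuous.measurable, ← Measure.map_smul,
    ← Measure.isAddLeftInvariant_eq_smul]

theorem exists_setIntegral_image_hausdorffMeasure_eq_mul (hφ : Function.Injective φ) :
    ∃ c : ℝ, c ≠ 0 ∧ ∀ (s : Set E) (g : F → ℝ),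
      ∫ y in φ '' s, g y ∂μH[Module.finrank ℝ E] = c * ∫ x in s, g (φ x) ∂μ := by
  obtain ⟨c, hc, h⟩ := exists_hausdorffMeasure_restrict_range_eq_smul_map μ hφ
  refine ⟨c, NNReal.coe_ne_zero.2 hc, fun s g => ?_⟩
  rw [← Measure.restrict_restrict_of_subset (Set.image_subset_range φ s), h,
    Measure.restrict_smul, integral_smul_nnreal_measure,
    (measurableEmbedding_of_injective_affineMap hφ).setIntegral_map, hφ.preimage_image]
  rfl

end HausdorffIntegral

theorem integral_pow_mul_sub_pow {L : ℝ} (hL : 0 ≤ L) (i k : ℕ) :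
    ∫ t in (0 : ℝ)..L, t ^ i * (L - t) ^ k =
      i.factorial * k.factorial / (i + k + 1).factorial * L ^ (i + k + 1) := by
  rcases hL.eq_or_lt with rfl | hL
  · simp
  have hbeta : (i.factorial * k.factorial : ℂ) =
      (i + k + 1).factorial * Complex.betaIntegral (i + 1) (k + 1) := by
    have h := Complex.Gamma_mul_Gamma_eq_betaIntegral (s := i + 1) (t := k + 1)
      (by norm_cast; positivity) (by norm_cast; positivity)
    rwa [show (i + 1 : ℂ) + (k + 1) = (i + k + 1 : ℕ) + 1 by push_cast; ring,
      Complex.Gamma_nat_eq_factorial, Complex.Gamma_nat_eq_factorial,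
      Complex.Gamma_nat_eq_factorial] at h
  have hscaled := Complex.betaIntegral_scaled (i + 1) (k + 1) hL
  rw [show (i + 1 : ℂ) + (k + 1) - 1 = (i + k + 1 : ℕ) by push_cast; ring] at hscaled
  simp only [add_sub_cancel_right, Complex.cpow_natCast] at hscaled
  have hfact : ((i + k + 1).factorial : ℂ) ≠ 0 := Nat.cast_ne_zero.2 (Nat.factorial_ne_zero _)
  rw [← Complex.ofReal_inj, ← intervalIntegral.integral_ofReal]
  push_cast
  rw [hscaled, hbeta]
  field_simp

/-- The barycentric coordinates of the triangle with vertices `(0, 0)`, `(1, 0)`, `(0, 1)`,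
listed in this order of the vertices. -/
def refBary (p : ℝ × ℝ) : Fin 3 → ℝ := ![1 - p.1 - p.2, p.1, p.2]

/-- The reference triangle, from which the face moments are computed. -/
def refTriangle : Set (ℝ × ℝ) := {p | ∀ m, 0 ≤ refBary p m}

theorem continuous_refBary (m : Fin 3) : Continuous fun p => refBary p m := by
  fin_cases m <;> simp only [refBary, Fin.zero_eta, Fin.mk_one, Fin.reduceFinMk,
    Matrix.cons_val] <;> fun_prop

theorem continuous_prod_refBary_pow (α : Fin 3 → ℕ) :
    Continuous fun p => ∏ m, refBary p m ^ α m :=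
  continuous_finsetProd _ fun m _ => (continuous_refBary m).pow (α m)

theorem sum_refBary (p : ℝ × ℝ) : ∑ m, refBary p m = 1 := by
  simp only [refBary, Fin.sum_univ_three, Matrix.cons_val]
  ring

theorem mem_refTriangle_iff {p : ℝ × ℝ} :
    p ∈ refTriangle ↔ p.1 ∈ Set.Icc 0 1 ∧ p.2 ∈ Set.Icc 0 (1 - p.1) := by
  simp only [refTriangle, refBary, Set.mem_ofPred_eq, Fin.forall_fin_succ, Matrix.cons_val_zero,
    Matrix.cons_val_succ, IsEmpty.forall_iff, and_true, Set.mem_Icc]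
  grind

theorem isCompact_refTriangle : IsCompact refTriangle := by
  refine (isCompact_Icc.prod isCompact_Icc : IsCompact (Set.Icc (0 : ℝ) 1 ×ˢ Set.Icc (0 : ℝ) 1))
    |>.of_isClosed_subset ?_ fun p hp => ?_
  · simp only [refTriangle, Set.ofPred_forall]
    exact isClosed_iInter fun m => isClosed_le continuous_const (continuous_refBary m)
  · obtain ⟨h₁, h₂⟩ := mem_refTriangle_iff.1 hp
    exact ⟨h₁, h₂.1, h₂.2.trans (sub_le_self 1 h₁.1)⟩

theorem setIntegral_refTriangle {E : Type*} [NormedAddCommGroup E] [NormedSpace ℝ E]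
    {f : ℝ × ℝ → E} (hf : Continuous f) :
    ∫ p in refTriangle, f p = ∫ s in (0 : ℝ)..1, ∫ t in (0 : ℝ)..(1 - s), f (s, t) := by
  have hmeas : MeasurableSet refTriangle := isCompact_refTriangle.measurableSet
  have hslice (s : ℝ) : ∫ t, refTriangle.indicator f (s, t) =
      (Set.Icc 0 1).indicator (fun s => ∫ t in (0 : ℝ)..(1 - s), f (s, t)) s := by
    by_cases hs : s ∈ Set.Icc (0 : ℝ) 1
    · rw [Set.indicator_of_mem hs, intervalIntegral.integral_of_le (sub_nonneg.2 hs.2),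
        ← integral_Icc_eq_integral_Ioc, ← integral_indicator measurableSet_Icc]
      congr 1 with t
      simp only [Set.indicator_apply, mem_refTriangle_iff, hs, true_and]
    · have hzero (t : ℝ) : refTriangle.indicator f (s, t) = 0 :=
        Set.indicator_of_notMem (fun h => hs (mem_refTriangle_iff.1 h).1) f
      simp only [hzero, integral_zero, Set.indicator_of_notMem hs]
  rw [← integral_indicator hmeas, Measure.volume_eq_prod, integral_prod]
  · simp only [hslice, integral_indicator measurableSet_Icc, integral_Icc_eq_integral_Ioc,
      intervalIntegral.integral_of_le zero_le_one]
  · exact (hf.continuousOn.integrableOn_compact isCompact_refTriangle).integrable_indicator hmeas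

theorem setIntegral_refTriangle_prod_refBary_pow (α : Fin 3 → ℕ) :
    ∫ p in refTriangle, ∏ m, refBary p m ^ α m =
      (∏ m, (α m).factorial : ℝ) / (∑ m, α m + 2).factorial := by
  rw [setIntegral_refTriangle (continuous_prod_refBary_pow α)]
  simp only [refBary, Fin.prod_univ_three, Fin.sum_univ_three, Matrix.cons_val]
  have hinner : ∀ s ∈ Set.uIcc (0 : ℝ) 1,
      ∫ t in (0 : ℝ)..(1 - s), (1 - s - t) ^ α 0 * s ^ α 1 * t ^ α 2 =
        (α 2).factorial * (α 0).factorial / (α 2 + α 0 + 1).factorial *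
          (s ^ α 1 * (1 - s) ^ (α 2 + α 0 + 1)) := fun s hs => by
    rw [Set.uIcc_of_le zero_le_one] at hs
    simp only [fun t : ℝ => show (1 - s - t) ^ α 0 * s ^ α 1 * t ^ α 2 =
      s ^ α 1 * (t ^ α 2 * (1 - s - t) ^ α 0) by ring]
    rw [intervalIntegral.integral_const_mul, integral_pow_mul_sub_pow (sub_nonneg.2 hs.2)]
    ring
  rw [intervalIntegral.integral_congr hinner, intervalIntegral.integral_const_mul,
    integral_pow_mul_sub_pow zero_le_one,
    show α 1 + (α 2 + α 0 + 1) + 1 = α 0 + α 1 + α 2 + 2 by ring]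
  have : ((α 2 + α 0 + 1).factorial : ℝ) ≠ 0 := Nat.cast_ne_zero.2 (Nat.factorial_ne_zero _)
  field_simp
  simp

theorem setIntegral_refTriangle_sum_prod_refBary_pow {ι : Type*} [Fintype ι] (c : ι → ℝ)
    (α : ι → Fin 3 → ℕ) :
    ∫ p in refTriangle, ∑ n, c n * ∏ m, refBary p m ^ α n m =
      ∑ n, c n * ((∏ m, (α n m).factorial : ℝ) / (∑ m, α n m + 2).factorial) := by
  rw [integral_finsetSum _ fun n _ => ?_]
  · simp only [integral_const_mul, setIntegral_refTriangle_prod_refBary_pow]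
  · exact (continuous_const.mul (continuous_prod_refBary_pow (α n))).continuousOn
      |>.integrableOn_compact isCompact_refTriangle

theorem pd_const (i : Fin 3) (c : ℝ) (x : Vec) : pd i (fun _ => c) x = 0 := by
  simp only [pd, fderiv_fun_const, Pi.zero_apply, zero_apply]

theorem pd_coord (i j : Fin 3) (x : Vec) :
    pd i (fun y => y j) x = (Pi.single i 1 : Vec) j := by
  rw [pd, (hasFDerivAt_apply j x).fderiv, ContinuousLinearMap.proj_apply]

theorem pd_add (i : Fin 3) {f g : Vec → ℝ} {x : Vec} (hf : DifferentiableAt ℝ f x)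
    (hg : DifferentiableAt ℝ g x) : pd i (fun y => f y + g y) x = pd i f x + pd i g x := by
  simp only [pd, fderiv_fun_add hf hg, add_apply]

theorem pd_mul (i : Fin 3) {f g : Vec → ℝ} {x : Vec} (hf : DifferentiableAt ℝ f x)
    (hg : DifferentiableAt ℝ g x) :
    pd i (fun y => f y * g y) x = pd i f x * g x + f x * pd i g x := by
  simp only [pd, fderiv_fun_mul hf hg, add_apply, smul_apply, smul_eq_mul]
  ring

namespace PolyDeg

variable {k l : ℕ} {f g : Vec → ℝ}

theorem mono (hf : PolyDeg k f) (hkl : k ≤ l) : PolyDeg l f :=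
  let ⟨p, hp, hfp⟩ := hf
  ⟨p, hp.trans hkl, hfp⟩

theorem const (k : ℕ) (c : ℝ) : PolyDeg k fun _ => c :=
  ⟨MvPolynomial.C c, by simp, by simp⟩

theorem coord (i : Fin 3) : PolyDeg 1 fun x => x i :=
  ⟨MvPolynomial.X i, by simp, by simp⟩

theorem add (hf : PolyDeg k f) (hg : PolyDeg k g) : PolyDeg k fun x => f x + g x := by
  obtain ⟨p, hp, hfp⟩ := hf
  obtain ⟨q, hq, hgq⟩ := hg
  exact ⟨p + q, (MvPolynomial.totalDegree_add p q).trans (max_le hp hq), by simp [hfp, hgq]⟩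

theorem mul (hf : PolyDeg k f) (hg : PolyDeg l g) : PolyDeg (k + l) fun x => f x * g x := by
  obtain ⟨p, hp, hfp⟩ := hf
  obtain ⟨q, hq, hgq⟩ := hg
  exact ⟨p * q, (MvPolynomial.totalDegree_mul p q).trans (add_le_add hp hq), by simp [hfp, hgq]⟩

theorem const_mul (c : ℝ) (hf : PolyDeg k f) : PolyDeg k fun x => c * f x := by
  simpa only [zero_add] using (const 0 c).mul hf

theorem sub (hf : PolyDeg k f) (hg : PolyDeg k g) : PolyDeg k fun x => f x - g x := by
  simpa only [neg_one_mul, ← sub_eq_add_neg] using hf.add (hg.const_mul (-1))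

theorem exists_eq_const (hf : PolyDeg 0 f) : ∃ c, f = fun _ => c := by
  obtain ⟨p, hp, hfp⟩ := hf
  rw [MvPolynomial.totalDegree_eq_zero_iff_eq_C.1 (Nat.le_zero.1 hp)] at hfp
  exact ⟨_, funext fun x => (hfp x).trans (MvPolynomial.eval_C _)⟩

theorem succ_induction {motive : (Vec → ℝ) → Prop} (const : ∀ c, motive fun _ => c)
    (add : ∀ f g, motive f → motive g → motive fun x => f x + g x)
    (coord_mul : ∀ i g, PolyDeg k g → motive fun x => x i * g x) (hf : PolyDeg (k + 1) f) :
    motive f := by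
  obtain ⟨p, hp, hfp⟩ := hf
  rw [show f = fun x => MvPolynomial.eval x p from funext hfp, p.as_sum]
  refine Finset.sum_induction _ (fun q => motive fun x => MvPolynomial.eval x q)
    (fun q₁ q₂ h₁ h₂ => ?_) (by simpa only [map_zero] using const 0) fun d hd => ?_
  · simpa only [map_add] using add _ _ h₁ h₂
  have hdeg : d.degree ≤ k + 1 := (MvPolynomial.le_totalDegree hd).trans hp
  rcases eq_or_ne d 0 with rfl | hd0
  · simpa only [MvPolynomial.monomial_zero', MvPolynomial.eval_C] using const _
  obtain ⟨i, hi⟩ := Finsupp.ne_iff.1 hd0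
  obtain ⟨e, rfl⟩ : ∃ e, d = Finsupp.single i 1 + e :=
    le_iff_exists_add.1 (Finsupp.single_le_iff.2 (Nat.one_le_iff_ne_zero.2 hi))
  have he : e.degree ≤ k := by
    rw [map_add, Finsupp.degree_single] at hdeg
    omega
  have hmul (c : ℝ) : MvPolynomial.monomial (Finsupp.single i 1 + e) c =
      MvPolynomial.X i * MvPolynomial.monomial e c := by
    rw [MvPolynomial.X, MvPolynomial.monomial_mul, one_mul]
  simpa only [hmul, map_mul, MvPolynomial.eval_X] using
    coord_mul i _ ⟨_, (MvPolynomial.totalDegree_monomial_le _ _).trans he, fun _ => rfl⟩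

theorem differentiable (hf : PolyDeg k f) : Differentiable ℝ f := by
  induction k generalizing f with
  | zero =>
    obtain ⟨c, rfl⟩ := hf.exists_eq_const
    exact differentiable_const c
  | succ k ih =>
    exact succ_induction differentiable_const (fun _ _ => Differentiable.add)
      (fun i _ hg => (differentiable_apply i).mul (ih hg)) hf

theorem pd (i : Fin 3) (hf : PolyDeg (k + 1) f) : PolyDeg k (pd i f) := by
  induction k using Nat.strong_induction_on generalizing f with
  | _ k ih =>
  have hcoord_mul (j : Fin 3) {g : Vec → ℝ} (hg : PolyDeg k g) :
      PolyDeg k fun x => x j * _root_.pd i g x := by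
    cases k with
    | zero =>
      obtain ⟨c, rfl⟩ := hg.exists_eq_const
      simpa only [pd_const, mul_zero] using const 0 0
    | succ k => exact ((coord j).mul (ih k k.lt_succ_self hg)).mono (add_comm 1 k).le
  refine (succ_induction (motive := fun f => Differentiable ℝ f ∧ PolyDeg k (_root_.pd i f))
    (fun c => ⟨differentiable_const c, ?_⟩) (fun f g hf hg => ⟨hf.1.add hg.1, ?_⟩)
    (fun j g hg => ⟨(differentiable_apply j).mul hg.differentiable, ?_⟩) hf).2
  · simpa only [funext fun x => pd_const i c x] using const k 0
  · simpa only [funext fun x => pd_add i (hf.1 x) (hg.1 x)] using hf.2.add hg.2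
  · simpa only [funext fun x => pd_mul i (differentiableAt_apply j x) (hg.differentiable x),
      pd_coord] using (hg.const_mul _).add (hcoord_mul j hg)

theorem apply_sum_smul {ι : Type*} [Fintype ι] (hf : PolyDeg 1 f) (x : ι → Vec) {a : ι → ℝ}
    (ha : ∑ i, a i = 1) : f (∑ i, a i • x i) = ∑ i, a i * f (x i) := by
  refine succ_induction (motive := fun f => f (∑ i, a i • x i) = ∑ i, a i * f (x i))
    (fun c => ?_) (fun f g hf hg => ?_) (fun i g hg => ?_) hf
  · rw [← Finset.sum_mul, ha, one_mul]
  · simp only [hf, hg, mul_add, Finset.sum_add_distrib]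
  · obtain ⟨c, rfl⟩ := hg.exists_eq_const
    simp only [Finset.sum_apply, Pi.smul_apply, smul_eq_mul, Finset.sum_mul, mul_assoc]

end PolyDeg

open scoped Matrix

theorem dot3_eq_dotProduct (v w : Vec) : dot3 v w = v ⬝ᵥ w := rfl

theorem cross3_eq_crossProduct (v w : Vec) : cross3 v w = v ⨯₃ w :=
  (cross_apply v w).symm

section PolarForm

variable {V E : Type*} [AddCommGroup V] [Module ℝ V] [AddCommGroup E] [Module ℝ E]

/-- The polarisation of a function of degree at most two: the symmetric biaffine map that
restricts to `f` on the diagonal. It is determined by the values of `f` at the midpoint and the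
ends of a segment; for `f` of higher degree the formula has no such meaning. -/
def polarForm (f : V → E) (x y : V) : E :=
  (2 : ℝ) • f (midpoint ℝ x y) - (2⁻¹ : ℝ) • (f x + f y)

theorem polarForm_self (f : V → E) (x : V) : polarForm f x x = f x := by
  rw [polarForm, midpoint_self]
  module

theorem polarForm_comm (f : V → E) (x y : V) : polarForm f x y = polarForm f y x := by
  rw [polarForm, polarForm, midpoint_comm, add_comm (f x)]

theorem polarForm_add (f g : V → E) (x y : V) :
    polarForm (fun z => f z + g z) x y = polarForm f x y + polarForm g x y := by
  simp only [polarForm]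
  module

theorem polarForm_apply {ι : Type*} (v : V → ι → ℝ) (x y : V) (i : ι) :
    polarForm v x y i = polarForm (fun z => v z i) x y := rfl

end PolarForm

theorem PolyDeg.apply_midpoint {f : Vec → ℝ} (hf : PolyDeg 1 f) (x y : Vec) :
    f (midpoint ℝ x y) = 2⁻¹ * (f x + f y) := by
  have h := hf.apply_sum_smul ![x, y] (a := ![2⁻¹, 2⁻¹]) (by norm_num)
  simp only [Fin.sum_univ_two, Matrix.cons_val_zero, Matrix.cons_val_one, ← smul_add] at h
  rw [midpoint_eq_smul_add, invOf_eq_inv, h, mul_add]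

theorem PolyDeg.polarForm_mul {f g : Vec → ℝ} (hf : PolyDeg 1 f) (hg : PolyDeg 1 g) (x y : Vec) :
    polarForm (fun z => f z * g z) x y = 2⁻¹ * (f x * g y + f y * g x) := by
  simp only [polarForm, hf.apply_midpoint, hg.apply_midpoint, smul_eq_mul]
  ring

theorem PolyDeg.apply_sum_smul_eq_sum_polarForm {ι : Type*} [Fintype ι] {f : Vec → ℝ}
    (hf : PolyDeg 2 f) (x : ι → Vec) {a : ι → ℝ} (ha : ∑ i, a i = 1) :
    f (∑ i, a i • x i) = ∑ i, ∑ j, a i * a j * polarForm f (x i) (x j) := by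
  refine succ_induction
    (motive := fun f => f (∑ i, a i • x i) = ∑ i, ∑ j, a i * a j * polarForm f (x i) (x j))
    (fun c => ?_) (fun f g hf hg => ?_) (fun m g hg => ?_) hf
  · simp only [polarForm, ← Finset.sum_mul, ← Finset.mul_sum, ha, smul_eq_mul]
    ring
  · simp only [hf, hg, polarForm_add, mul_add, Finset.sum_add_distrib]
  · beta_reduce
    have hswap : ∑ i, ∑ j, a i * a j * (x j m * g (x i)) =
        ∑ i, ∑ j, a i * a j * (x i m * g (x j)) := by
      rw [Finset.sum_comm]
      simp only [mul_comm (a _) (a _)]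
    have hprod : (∑ i, a i * x i m) * (∑ j, a j * g (x j)) =
        ∑ i, ∑ j, a i * a j * (x i m * g (x j)) := by
      rw [Finset.sum_mul_sum]
      exact Finset.sum_congr rfl fun i _ => Finset.sum_congr rfl fun j _ => by ring
    rw [(coord m).apply_sum_smul x ha, hg.apply_sum_smul x ha, hprod]
    simp only [(coord m).polarForm_mul hg, mul_add, mul_left_comm _ (2⁻¹ : ℝ),
      Finset.sum_add_distrib, ← Finset.mul_sum, hswap]
    ring

namespace VPolyDeg

variable {k : ℕ} {v : Vec → Vec}

theorem apply_sum_smul {ι : Type*} [Fintype ι] (hv : VPolyDeg 1 v) (x : ι → Vec) {a : ι → ℝ}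
    (ha : ∑ i, a i = 1) : v (∑ i, a i • x i) = ∑ i, a i • v (x i) := by
  ext m
  simp only [(hv m).apply_sum_smul x ha, Finset.sum_apply, Pi.smul_apply, smul_eq_mul]

theorem apply_midpoint (hv : VPolyDeg 1 v) (x y : Vec) :
    v (midpoint ℝ x y) = (2⁻¹ : ℝ) • (v x + v y) :=
  funext fun m => (hv m).apply_midpoint x y

theorem apply_sum_smul_eq_sum_polarForm {ι : Type*} [Fintype ι] (hv : VPolyDeg 2 v)
    (x : ι → Vec) {a : ι → ℝ} (ha : ∑ i, a i = 1) :
    v (∑ i, a i • x i) = ∑ i, ∑ j, (a i * a j) • polarForm v (x i) (x j) := by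
  ext m
  simp only [(hv m).apply_sum_smul_eq_sum_polarForm x ha, Finset.sum_apply, Pi.smul_apply,
    smul_eq_mul, polarForm_apply]

theorem dot_const (hv : VPolyDeg k v) (d : Vec) : PolyDeg k fun x => v x ⬝ᵥ d := by
  simpa only [dotProduct, Fin.sum_univ_three, mul_comm _ (d _)] using
    (((hv 0).const_mul (d 0)).add ((hv 1).const_mul (d 1))).add ((hv 2).const_mul (d 2))

end VPolyDeg

theorem PolyDeg.vPolyDeg_grad3 {k : ℕ} {q : Vec → ℝ} (hq : PolyDeg (k + 1) q) :
    VPolyDeg k (grad3 q) := fun i => hq.pd i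

theorem VPolyDeg.id_cross {p : Vec → Vec} (hp : VPolyDeg 1 p) :
    VPolyDeg 2 fun x => cross3 x (p x) := fun i => by
  fin_cases i
  · exact ((PolyDeg.coord 1).mul (hp 2)).sub ((PolyDeg.coord 2).mul (hp 1))
  · exact ((PolyDeg.coord 2).mul (hp 0)).sub ((PolyDeg.coord 0).mul (hp 2))
  · exact ((PolyDeg.coord 0).mul (hp 1)).sub ((PolyDeg.coord 1).mul (hp 0))

theorem VPolyDeg.const_cross {k : ℕ} (u : Vec) {p : Vec → Vec} (hp : VPolyDeg k p) :
    VPolyDeg k fun x => u ⨯₃ p x := fun i => by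
  simp only [← cross3_eq_crossProduct]
  fin_cases i
  · exact ((hp 2).const_mul (u 1)).sub ((hp 1).const_mul (u 2))
  · exact ((hp 0).const_mul (u 2)).sub ((hp 2).const_mul (u 0))
  · exact ((hp 1).const_mul (u 0)).sub ((hp 0).const_mul (u 1))

theorem convexHull_range_eq_image_stdSimplex {ι E : Type*} [Fintype ι] [AddCommGroup E]
    [Module ℝ E] (x : ι → E) :
    convexHull ℝ (Set.range x) = (fun a : ι → ℝ => ∑ i, a i • x i) '' stdSimplex ℝ ι := by
  have himage := (Fintype.linearCombination ℝ x).image_convexHull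
    (Set.range fun i : ι => (Pi.single i 1 : ι → ℝ))
  have hsingle : (Fintype.linearCombination ℝ x) ∘ (fun i => (Pi.single i 1 : ι → ℝ)) = x :=
    funext fun i => by simp
  rw [convexHull_rangle_single_eq_stdSimplex, ← Set.range_comp, hsingle] at himage
  exact himage.symm

theorem image_refBary_refTriangle : refBary '' refTriangle = stdSimplex ℝ (Fin 3) := by
  ext a
  constructor
  · rintro ⟨p, hp, rfl⟩
    exact ⟨hp, sum_refBary p⟩
  · rintro ⟨hnonneg, hsum⟩
    have ha : refBary (a 1, a 2) = a := by
      rw [Fin.sum_univ_three] at hsum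
      ext m
      fin_cases m
      · simp only [refBary, Fin.zero_eta, Matrix.cons_val_zero]
        linarith
      · rfl
      · rfl
    exact ⟨(a 1, a 2), fun m => by rw [ha]; exact hnonneg m, ha⟩

section TriangleMap

variable {E : Type*} [AddCommGroup E] [Module ℝ E] (x : Fin 3 → E)

/-- The affine map taking the vertices of the reference triangle to `x 0`, `x 1`, `x 2`; it
parametrises the triangle they span. -/
def triangleMap : ℝ × ℝ →ᵃ[ℝ] E where
  toFun p := ∑ m, refBary p m • x m
  linear := (LinearMap.fst ℝ ℝ ℝ).smulRight (x 1 - x 0) +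
    (LinearMap.snd ℝ ℝ ℝ).smulRight (x 2 - x 0)
  map_vadd' p d := by
    simp only [refBary, Fin.sum_univ_three, Matrix.cons_val, vadd_eq_add, Prod.fst_add,
      Prod.snd_add, LinearMap.add_apply, LinearMap.smulRight_apply, LinearMap.fst_apply,
      LinearMap.snd_apply]
    module

theorem triangleMap_apply (p : ℝ × ℝ) : triangleMap x p = ∑ m, refBary p m • x m := rfl

theorem triangleMap_sub (p : ℝ × ℝ) (y : E) :
    triangleMap x p - y = ∑ m, refBary p m • (x m - y) := by
  simp only [triangleMap_apply, smul_sub, Finset.sum_sub_distrib, ← Finset.sum_smul, sum_refBary,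
    one_smul]

variable {x}

theorem triangleMap_injective (hx : AffineIndependent ℝ x) :
    Function.Injective (triangleMap x) := by
  intro p p' h
  have hbary : refBary p = refBary p' :=
    (affineIndependent_iff_eq_of_fintype_affineCombination_eq ℝ x).1 hx _ _ (sum_refBary p)
      (sum_refBary p') <| by
        rw [Finset.affineCombination_eq_linear_combination _ _ _ (sum_refBary p),
          Finset.affineCombination_eq_linear_combination _ _ _ (sum_refBary p')]
        exact h
  exact Prod.ext (congrFun hbary 1) (congrFun hbary 2)

theorem image_triangleMap_refTriangle (x : Fin 3 → E) :
    triangleMap x '' refTriangle = convexHull ℝ (Set.range x) := by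
  rw [convexHull_range_eq_image_stdSimplex, ← image_refBary_refTriangle, Set.image_image]
  rfl

end TriangleMap

theorem crossProduct_sub_ne_zero_of_affineIndependent {x : Fin 3 → Vec}
    (hx : AffineIndependent ℝ x) : (x 1 - x 0) ⨯₃ (x 2 - x 0) ≠ 0 := by
  rw [crossProduct_ne_zero_iff_linearIndependent]
  have h : LinearIndependent ℝ fun m : Fin 2 => x m.succ - x 0 :=
    ((affineIndependent_iff_linearIndependent_vsub ℝ x 0).1 hx).comp
      (fun m : Fin 2 => (⟨m.succ, m.succ_ne_zero⟩ : {m : Fin 3 // m ≠ 0}))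
      fun _ _ hm => Fin.succ_injective 2 (congrArg Subtype.val hm)
  have hcons : (fun m : Fin 2 => x m.succ - x 0) = ![x 1 - x 0, x 2 - x 0] :=
    funext fun m => by fin_cases m <;> rfl
  rwa [hcons] at h

theorem dot_normalize3_self {u : Vec} (hu : u ≠ 0) : normalize3 u ⬝ᵥ normalize3 u = 1 := by
  have hpos : 0 < u ⬝ᵥ u := (Finset.sum_nonneg fun i _ => mul_self_nonneg (u i)).lt_of_ne'
    (dotProduct_self_eq_zero.not.2 hu)
  rw [normalize3, enorm3, dot3_eq_dotProduct, smul_dotProduct, dotProduct_smul, smul_eq_mul,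
    smul_eq_mul, ← mul_assoc, ← mul_inv, Real.mul_self_sqrt hpos.le, inv_mul_cancel₀ hpos.ne']

namespace Tetra

variable (T : Tetra) (a : Fin 4)

/-- The vertices of the face opposite to vertex `a`, in increasing order of their indices. -/
def faceVtx (m : Fin 3) : Vec := T.vtx (a.succAbove m)

theorem affineIndependent_faceVtx : AffineIndependent ℝ (T.faceVtx a) :=
  T.indep.comp_embedding a.succAboveEmb

theorem face_eq_image_triangleMap : T.face a = triangleMap (T.faceVtx a) '' refTriangle := by
  rw [image_triangleMap_refTriangle, face, show T.faceVtx a = T.vtx ∘ a.succAbove from rfl,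
    Set.range_comp, Fin.range_succAbove]
  rfl

theorem exists_outNormal_eq_smul : ∃ s : ℝ, s * s = 1 ∧ T.outNormal a =
    s • normalize3 ((T.faceVtx a 1 - T.faceVtx a 0) ⨯₃ (T.faceVtx a 2 - T.faceVtx a 0)) := by
  simp only [outNormal, cross3_eq_crossProduct]
  refine ⟨_, ?_, rfl⟩
  split_ifs <;> norm_num

theorem outNormal_dot_self : T.outNormal a ⬝ᵥ T.outNormal a = 1 := by
  obtain ⟨s, hs, h⟩ := T.exists_outNormal_eq_smul a
  rw [h, smul_dotProduct, dotProduct_smul, smul_smul, hs, one_smul,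
    dot_normalize3_self
      (crossProduct_sub_ne_zero_of_affineIndependent (T.affineIndependent_faceVtx a))]

theorem outNormal_dot_faceVtx_sub (m l : Fin 3) :
    T.outNormal a ⬝ᵥ (T.faceVtx a m - T.faceVtx a l) = 0 := by
  have hzero (m : Fin 3) : T.outNormal a ⬝ᵥ (T.faceVtx a m - T.faceVtx a 0) = 0 := by
    obtain ⟨s, -, h⟩ := T.exists_outNormal_eq_smul a
    rw [h, normalize3, smul_dotProduct, smul_dotProduct, dotProduct_comm]
    match m with
    | 0 => rw [sub_self, zero_dotProduct, smul_zero, smul_zero]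
    | 1 => rw [dot_self_cross, smul_zero, smul_zero]
    | 2 => rw [dot_cross_self, smul_zero, smul_zero]
  rw [← sub_sub_sub_cancel_right _ _ (T.faceVtx a 0), dotProduct_sub, hzero, hzero, sub_zero]

theorem exists_sum_smul_vtx_eq (x : Vec) :
    ∃ c : Fin 4 → ℝ, ∑ i, c i = 1 ∧ ∑ i, c i • T.vtx i = x := by
  have hspan : affineSpan ℝ (Set.range T.vtx) = ⊤ :=
    T.indep.affineSpan_eq_top_iff_card_eq_finrank_add_one.2 (by simp)
  obtain ⟨c, hc, hx⟩ := eq_affineCombination_of_mem_affineSpan_of_fintype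
    (hspan ▸ AffineSubspace.mem_top ℝ Vec x)
  exact ⟨c, hc, by rw [hx, Finset.affineCombination_eq_linear_combination _ _ _ hc]⟩

variable {T}

theorem eq_zero_of_dot_vtx_sub_eq_zero {u : Vec} (i : Fin 4)
    (hu : ∀ j, u ⬝ᵥ (T.vtx j - T.vtx i) = 0) : u = 0 := by
  obtain ⟨c, hc, hx⟩ := T.exists_sum_smul_vtx_eq (T.vtx i + u)
  have hcomb : ∑ j, c j • (T.vtx j - T.vtx i) = u := by
    simp only [smul_sub, Finset.sum_sub_distrib, hx, ← Finset.sum_smul, hc, one_smul,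
      add_sub_cancel_left]
  have hself : u ⬝ᵥ u = 0 := by
    nth_rw 2 [← hcomb]
    simp only [dotProduct_sum, dotProduct_smul, hu, smul_zero, Finset.sum_const_zero]
  exact dotProduct_self_eq_zero.1 hself

end Tetra

theorem PolyDeg.sub_eq_grad3_dotProduct {f : Vec → ℝ} (hf : PolyDeg 1 f) (x y z : Vec) :
    f y - f x = grad3 f z ⬝ᵥ (y - x) := by
  have hgrad : ∀ f : Vec → ℝ, grad3 f z = fun i => _root_.pd i f z := fun _ => rfl
  refine (succ_induction
    (motive := fun f => DifferentiableAt ℝ f z ∧ f y - f x = grad3 f z ⬝ᵥ (y - x))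
    (fun c => ⟨differentiableAt_const c, ?_⟩)
    (fun f g hf hg => ⟨hf.1.add hg.1, ?_⟩) (fun i g hg => ?_) hf).2
  · simp only [hgrad, pd_const, dotProduct, zero_mul, Finset.sum_const_zero, sub_self]
  · simp only [hgrad, pd_add _ hf.1 hg.1, dotProduct, add_mul, Finset.sum_add_distrib] at hf hg ⊢
    linear_combination hf.2 + hg.2
  · obtain ⟨c, rfl⟩ := hg.exists_eq_const
    refine ⟨(differentiableAt_apply i z).mul_const c, ?_⟩
    simp only [hgrad, pd_mul _ (differentiableAt_apply i z) (differentiableAt_const c), pd_coord,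
      pd_const, mul_zero, add_zero, dotProduct, Pi.single_apply, ite_mul, one_mul, zero_mul,
      Finset.sum_ite_eq, Finset.mem_univ, if_true, Pi.sub_apply]
    ring

namespace Tetra

variable {T : Tetra}

theorem eq_zero_of_apply_vtx_eq_zero {v : Vec → Vec} (hv : VPolyDeg 1 v)
    (h : ∀ i, v (T.vtx i) = 0) (x : Vec) : v x = 0 := by
  obtain ⟨c, hc, rfl⟩ := T.exists_sum_smul_vtx_eq x
  simp only [hv.apply_sum_smul T.vtx hc, h, smul_zero, Finset.sum_const_zero]

theorem eq_zero_of_polarForm_vtx_eq_zero {v : Vec → Vec} (hv : VPolyDeg 2 v)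
    (h : ∀ i j, polarForm v (T.vtx i) (T.vtx j) = 0) (x : Vec) : v x = 0 := by
  obtain ⟨c, hc, rfl⟩ := T.exists_sum_smul_vtx_eq x
  simp only [hv.apply_sum_smul_eq_sum_polarForm T.vtx hc, h, smul_zero, Finset.sum_const_zero]

namespace IsBary

variable {lam : Fin 4 → Vec → ℝ}

theorem apply_triangleMap_succAbove (hlam : T.IsBary lam) (a : Fin 4) (p : ℝ × ℝ) (m : Fin 3) :
    lam (a.succAbove m) (triangleMap (T.faceVtx a) p) = refBary p m := by
  rw [triangleMap_apply, (hlam.1 _).apply_sum_smul _ (sum_refBary p)]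
  simp only [faceVtx, hlam.2, Fin.succAbove_right_inj, mul_ite, mul_one, mul_zero,
    Finset.sum_ite_eq, Finset.mem_univ, if_true]

theorem apply_triangleMap_self (hlam : T.IsBary lam) (a : Fin 4) (p : ℝ × ℝ) :
    lam a (triangleMap (T.faceVtx a) p) = 0 := by
  rw [triangleMap_apply, (hlam.1 _).apply_sum_smul _ (sum_refBary p)]
  simp only [faceVtx, hlam.2, Fin.ne_succAbove, if_false, mul_zero, Finset.sum_const_zero]

theorem exists_grad3_eq_smul_outNormal (hlam : T.IsBary lam) (a : Fin 4) :
    ∃ s : ℝ, s ≠ 0 ∧ ∀ x, grad3 (lam a) x = s • T.outNormal a := by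
  set n := T.outNormal a with hn
  set s := n ⬝ᵥ (T.vtx a - T.faceVtx a 0)
  have hsub (x : Vec) (j : Fin 4) :
      grad3 (lam a) x ⬝ᵥ (T.vtx j - T.faceVtx a 0) = if a = j then 1 else 0 := by
    rw [← (hlam.1 a).sub_eq_grad3_dotProduct, faceVtx, hlam.2, hlam.2,
      if_neg (Fin.ne_succAbove a 0), sub_zero]
  have hnormal (x : Vec) : n = s • grad3 (lam a) x := by
    refine sub_eq_zero.1 (eq_zero_of_dot_vtx_sub_eq_zero (T := T) (a.succAbove 0) fun j => ?_)
    change _ ⬝ᵥ (T.vtx j - T.faceVtx a 0) = 0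
    rw [sub_dotProduct, smul_dotProduct, hsub]
    rcases eq_or_ne a j with rfl | hj
    · rw [if_pos rfl, smul_eq_mul, mul_one, sub_self]
    · obtain ⟨m, rfl⟩ := Fin.exists_succAbove_eq hj.symm
      rw [if_neg hj, smul_zero, sub_zero]
      exact T.outNormal_dot_faceVtx_sub a m 0
  have hs : s ≠ 0 := fun hs => by
    have hself := T.outNormal_dot_self a
    rw [← hn, hnormal 0, hs, zero_smul, zero_dotProduct] at hself
    exact zero_ne_one hself
  exact ⟨s⁻¹, inv_ne_zero hs, fun x => by rw [hnormal x, inv_smul_smul₀ hs]⟩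

end IsBary

theorem exists_faceTanMoment_eq_mul_setIntegral (T : Tetra) (a : Fin 4) : ∃ c : ℝ, c ≠ 0 ∧ ∀ v q,
    faceTanMoment T a v q = c * ∫ p in refTriangle,
      (v (triangleMap (T.faceVtx a) p) ⨯₃ T.outNormal a) ⬝ᵥ q (triangleMap (T.faceVtx a) p) := by
  obtain ⟨c, hc, h⟩ := exists_setIntegral_image_hausdorffMeasure_eq_mul volume
    (triangleMap_injective (T.affineIndependent_faceVtx a))
  refine ⟨c, hc, fun v q => ?_⟩
  rw [faceTanMoment, face_eq_image_triangleMap]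
  simpa only [Module.finrank_prod, Module.finrank_self, Nat.reduceAdd, Nat.cast_ofNat,
    dot3_eq_dotProduct, cross3_eq_crossProduct] using h refTriangle _

theorem exists_edgeMoment_eq_mul_setIntegral {i j : Fin 4} (hij : i ≠ j) : ∃ c : ℝ, c ≠ 0 ∧ ∀ v q,
    edgeMoment T i j v q = c * ∫ t in Set.Icc (0 : ℝ) 1,
      v (AffineMap.lineMap (T.vtx i) (T.vtx j) t) ⬝ᵥ (T.vtx j - T.vtx i) *
        q (AffineMap.lineMap (T.vtx i) (T.vtx j) t) := by
  have hne : T.vtx j - T.vtx i ≠ 0 := sub_ne_zero.2 (T.indep.injective.ne hij.symm)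
  obtain ⟨c, hc, h⟩ := exists_setIntegral_image_hausdorffMeasure_eq_mul volume
    (AffineMap.lineMap_injective ℝ (T.indep.injective.ne hij))
  have hscale : (enorm3 (T.vtx j - T.vtx i))⁻¹ ≠ 0 := fun h0 => by
    have hunit := dot_normalize3_self hne
    rw [normalize3, h0, zero_smul, zero_dotProduct] at hunit
    exact zero_ne_one hunit
  refine ⟨c * (enorm3 (T.vtx j - T.vtx i))⁻¹, mul_ne_zero hc hscale, fun v q => ?_⟩
  rw [edgeMoment, edge, segment_eq_image_lineMap, tangent, normalize3]
  have h := h (Set.Icc 0 1) fun x => dot3 (v x)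
    ((enorm3 (T.vtx j - T.vtx i))⁻¹ • (T.vtx j - T.vtx i)) * q x
  simp only [Module.finrank_self, Nat.cast_one] at h
  rw [h]
  simp only [dot3_eq_dotProduct, dotProduct_smul, smul_eq_mul, mul_assoc, integral_const_mul]

end Tetra

namespace MemND

variable {k : ℕ} {w : Vec → Vec} {T : Tetra}

theorem vPolyDeg_two (hk : k ≤ 2) (hw : MemND k w) : VPolyDeg 2 w := by
  obtain ⟨q, p, hq, hp, hw⟩ := hw
  rw [show w = fun x => grad3 q x + cross3 x (p x) from funext hw]
  exact fun i => ((hq.vPolyDeg_grad3 i).mono hk).add (hp.id_cross i)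

/-- With `x = y + t d` one has `(x × p) · d = (y × p) · d`, because `d × p` is orthogonal to `d`. -/
theorem exists_polyDeg_eq_dotProduct_lineMap (hk : 1 ≤ k) (hw : MemND k w) (y z : Vec) :
    ∃ g, PolyDeg k g ∧ ∀ t : ℝ,
      w (AffineMap.lineMap y z t) ⬝ᵥ (z - y) = g (AffineMap.lineMap y z t) := by
  obtain ⟨q, p, hq, hp, hw⟩ := hw
  refine ⟨fun x => (grad3 q x + y ⨯₃ p x) ⬝ᵥ (z - y), VPolyDeg.dot_const
    (fun i => (hq.vPolyDeg_grad3 i).add ((hp.const_cross y i).mono hk)) (z - y), fun t => ?_⟩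
  beta_reduce
  rw [hw, cross3_eq_crossProduct]
  generalize p _ = u
  generalize grad3 q _ = g
  rw [AffineMap.lineMap_apply_module', map_add, map_smul, LinearMap.add_apply,
    LinearMap.smul_apply, add_dotProduct, add_dotProduct, add_dotProduct, smul_dotProduct,
    dotProduct_comm ((z - y) ⨯₃ u), dot_self_cross, smul_zero, zero_add]

theorem dot_eq_zero_of_edgeMoment_eq_zero (hk : 1 ≤ k) (hw : MemND k w) {i j : Fin 4}
    (hij : i ≠ j) (h : ∀ q, PolyDeg k q → edgeMoment T i j w q = 0) {t : ℝ}
    (ht : t ∈ Set.Icc (0 : ℝ) 1) :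
    w (AffineMap.lineMap (T.vtx i) (T.vtx j) t) ⬝ᵥ (T.vtx j - T.vtx i) = 0 := by
  obtain ⟨g, hg, hwg⟩ := hw.exists_polyDeg_eq_dotProduct_lineMap hk (T.vtx i) (T.vtx j)
  obtain ⟨c, hc, hmoment⟩ := T.exists_edgeMoment_eq_mul_setIntegral hij
  have hcont : Continuous fun t : ℝ => g (AffineMap.lineMap (T.vtx i) (T.vtx j) t) :=
    hg.differentiable.continuous.comp AffineMap.lineMap_continuous
  have hsq : ∫ t in Set.Icc (0 : ℝ) 1, g (AffineMap.lineMap (T.vtx i) (T.vtx j) t) *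
      g (AffineMap.lineMap (T.vtx i) (T.vtx j) t) = 0 := by
    simpa only [hmoment, hwg, mul_eq_zero, hc, false_or] using h g hg
  rw [integral_eq_zero_iff_of_nonneg (fun t => mul_self_nonneg _)
    ((hcont.mul hcont).continuousOn.integrableOn_compact isCompact_Icc)] at hsq
  rw [hwg]
  exact mul_self_eq_zero.1 (Measure.eqOn_Icc_of_ae_eq volume zero_ne_one hsq
    (hcont.mul hcont).continuousOn continuousOn_const ht)

theorem apply_vtx_eq_zero (hk : 1 ≤ k) (hw : MemND k w)
    (h : ∀ i j, i ≠ j → ∀ q, PolyDeg k q → edgeMoment T i j w q = 0) (i : Fin 4) :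
    w (T.vtx i) = 0 := by
  refine T.eq_zero_of_dot_vtx_sub_eq_zero i fun j => ?_
  rcases eq_or_ne i j with rfl | hij
  · rw [sub_self, dotProduct_zero]
  · simpa only [AffineMap.lineMap_apply_zero] using
      hw.dot_eq_zero_of_edgeMoment_eq_zero hk hij (h i j hij) (Set.left_mem_Icc.2 zero_le_one)

theorem polarForm_vtx_dot_eq_zero (hk : 1 ≤ k) (hw : MemND k w)
    (h : ∀ i j, i ≠ j → ∀ q, PolyDeg k q → edgeMoment T i j w q = 0) (i j : Fin 4) :
    polarForm w (T.vtx i) (T.vtx j) ⬝ᵥ (T.vtx j - T.vtx i) = 0 := by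
  rcases eq_or_ne i j with rfl | hij
  · rw [sub_self, dotProduct_zero]
  have hmid : w (midpoint ℝ (T.vtx i) (T.vtx j)) ⬝ᵥ (T.vtx j - T.vtx i) = 0 :=
    hw.dot_eq_zero_of_edgeMoment_eq_zero hk hij (h i j hij) (by norm_num)
  rw [polarForm, hw.apply_vtx_eq_zero hk h, hw.apply_vtx_eq_zero hk h, add_zero, smul_zero,
    sub_zero, smul_dotProduct, hmid, smul_zero]

end MemND

theorem MemRM.cross_const (k : ℕ) (n t : Vec) : MemRM k n fun _ => n ⨯₃ t := by
  refine ⟨n ⨯₃ t, 0, ?_, fun _ => rfl, fun x => ?_⟩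
  · rw [dot3_eq_dotProduct, dotProduct_comm, dot_self_cross]
  · rw [zero_smul, add_zero]

theorem MemRM.cross_sub {k : ℕ} (hk : 1 < k) (n y : Vec) : MemRM k n fun x => n ⨯₃ (x - y) := by
  refine ⟨-(n ⨯₃ y), 1, ?_, fun hk' => absurd hk' hk.not_ge, fun x => ?_⟩
  · rw [dot3_eq_dotProduct, neg_dotProduct, dotProduct_comm, dot_self_cross, neg_zero]
  · rw [one_smul, cross3_eq_crossProduct, neg_add_eq_sub]
    exact map_sub _ _ _

namespace Tetra

variable (T : Tetra) (a : Fin 4)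

theorem outNormal_dot_triangleMap_sub (p : ℝ × ℝ) (l : Fin 3) :
    T.outNormal a ⬝ᵥ (triangleMap (T.faceVtx a) p - T.faceVtx a l) = 0 := by
  simp only [triangleMap_sub, dotProduct_sum, dotProduct_smul, outNormal_dot_faceVtx_sub,
    smul_zero, Finset.sum_const_zero]

variable {T a}

/-- For `y` tangential to the face, `(v × n) · (n × y) = -v · y`. -/
theorem setIntegral_dot_eq_zero_of_faceTanMoment_cross_eq_zero {v y : Vec → Vec}
    (hy : ∀ p, T.outNormal a ⬝ᵥ y (triangleMap (T.faceVtx a) p) = 0)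
    (h : faceTanMoment T a v (fun x => T.outNormal a ⨯₃ y x) = 0) :
    ∫ p in refTriangle,
      v (triangleMap (T.faceVtx a) p) ⬝ᵥ y (triangleMap (T.faceVtx a) p) = 0 := by
  obtain ⟨c, hc, hmoment⟩ := T.exists_faceTanMoment_eq_mul_setIntegral a
  simpa only [hmoment, mul_eq_zero, hc, false_or, cross_dot_cross, hy, outNormal_dot_self,
    mul_zero, mul_one, zero_sub, integral_neg, neg_eq_zero] using h

end Tetra

namespace VPolyDeg

variable {w : Vec → Vec} {x : Fin 3 → Vec}

theorem apply_triangleMap_of_apply_eq_zero (hw : VPolyDeg 2 w) (hx : ∀ m, w (x m) = 0) (p : ℝ × ℝ) :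
    w (triangleMap x p) = (2 * refBary p 0 * refBary p 1) • polarForm w (x 0) (x 1) +
      (2 * refBary p 0 * refBary p 2) • polarForm w (x 0) (x 2) +
      (2 * refBary p 1 * refBary p 2) • polarForm w (x 1) (x 2) := by
  rw [triangleMap_apply, hw.apply_sum_smul_eq_sum_polarForm x (sum_refBary p)]
  simp only [Fin.sum_univ_three, polarForm_self, hx, polarForm_comm w (x 1) (x 0),
    polarForm_comm w (x 2) (x 0), polarForm_comm w (x 2) (x 1)]
  module

theorem setIntegral_refTriangle_dot (hw : VPolyDeg 2 w) (hx : ∀ m, w (x m) = 0) (t : Vec) :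
    ∫ p in refTriangle, w (triangleMap x p) ⬝ᵥ t =
      (polarForm w (x 0) (x 1) + polarForm w (x 0) (x 2) + polarForm w (x 1) (x 2)) ⬝ᵥ t / 12 := by
  have h := setIntegral_refTriangle_sum_prod_refBary_pow
    ![2 * polarForm w (x 0) (x 1) ⬝ᵥ t, 2 * polarForm w (x 0) (x 2) ⬝ᵥ t,
      2 * polarForm w (x 1) (x 2) ⬝ᵥ t] ![![1, 1, 0], ![1, 0, 1], ![0, 1, 1]]
  simp only [Fin.sum_univ_three, Fin.prod_univ_three, Matrix.cons_val, pow_zero, pow_one, mul_one,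
    one_mul] at h
  simp only [hw.apply_triangleMap_of_apply_eq_zero hx, add_dotProduct, smul_dotProduct, smul_eq_mul]
  convert h using 1
  · congr 1 with p
    ring
  · norm_num [Nat.factorial]
    ring

theorem setIntegral_refTriangle_dot_sub (hw : VPolyDeg 2 w) (hx : ∀ m, w (x m) = 0)
    (hedge : ∀ m l, polarForm w (x m) (x l) ⬝ᵥ (x l - x m) = 0) :
    ∫ p in refTriangle, w (triangleMap x p) ⬝ᵥ (triangleMap x p - x 0) =
      (polarForm w (x 0) (x 1) ⬝ᵥ (x 2 - x 0) + polarForm w (x 0) (x 2) ⬝ᵥ (x 1 - x 0) -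
        4 * polarForm w (x 1) (x 2) ⬝ᵥ (x 0 - x 1)) / 60 := by
  have h := setIntegral_refTriangle_sum_prod_refBary_pow
    ![2 * (polarForm w (x 0) (x 1) ⬝ᵥ (x 2 - x 0) + polarForm w (x 0) (x 2) ⬝ᵥ (x 1 - x 0)),
      -2 * polarForm w (x 1) (x 2) ⬝ᵥ (x 0 - x 1), -2 * polarForm w (x 1) (x 2) ⬝ᵥ (x 0 - x 1)]
    ![![1, 1, 1], ![0, 2, 1], ![0, 1, 2]]
  have h₁₂ : polarForm w (x 1) (x 2) ⬝ᵥ (x 2 - x 0) = polarForm w (x 1) (x 2) ⬝ᵥ (x 1 - x 0) := by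
    rw [← sub_eq_zero, ← dotProduct_sub, sub_sub_sub_cancel_right, hedge]
  simp only [Fin.sum_univ_three, Fin.prod_univ_three, Matrix.cons_val, pow_zero, pow_one,
    one_mul] at h
  simp only [hw.apply_triangleMap_of_apply_eq_zero hx, triangleMap_sub,
    Fin.sum_univ_three, sub_self, smul_zero, zero_add, add_dotProduct, smul_dotProduct,
    dotProduct_add, dotProduct_smul, smul_eq_mul, hedge, h₁₂]
  rw [← neg_sub (x 1) (x 0), dotProduct_neg] at h ⊢
  convert h using 1
  · congr 1 with p
    ring
  · norm_num [Nat.factorial]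
    ring

theorem polarForm_dot_eq_of_setIntegral_eq_zero (hw : VPolyDeg 2 w) (hx : ∀ m, w (x m) = 0)
    (hedge : ∀ m l, polarForm w (x m) (x l) ⬝ᵥ (x l - x m) = 0)
    (hconst : ∀ m, ∫ p in refTriangle, w (triangleMap x p) ⬝ᵥ (x m - x 0) = 0) :
    polarForm w (x 0) (x 2) ⬝ᵥ (x 1 - x 0) = polarForm w (x 1) (x 2) ⬝ᵥ (x 0 - x 1) ∧
      polarForm w (x 0) (x 1) ⬝ᵥ (x 2 - x 0) = polarForm w (x 1) (x 2) ⬝ᵥ (x 0 - x 1) := by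
  have hedge₀₁ := hedge 0 1
  have hedge₀₂ := hedge 0 2
  have hedge₁₂ := hedge 1 2
  have hconst₁ := hconst 1
  have hconst₂ := hconst 2
  rw [hw.setIntegral_refTriangle_dot hx] at hconst₁ hconst₂
  simp only [add_dotProduct, dotProduct_sub] at hedge₀₁ hedge₀₂ hedge₁₂ hconst₁ hconst₂ ⊢
  constructor <;> linarith

/-- An affine field has `polarForm v x y = (v x + v y) / 2`. -/
theorem polarForm_cyclic (hw : VPolyDeg 1 w) (x y z : Vec) :
    2 * (polarForm w x y ⬝ᵥ (z - x) + polarForm w y z ⬝ᵥ (x - y) + polarForm w z x ⬝ᵥ (y - z)) =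
      w x ⬝ᵥ (y - x) + w y ⬝ᵥ (z - y) + w z ⬝ᵥ (x - z) := by
  simp only [polarForm, hw.apply_midpoint, dotProduct, Fin.sum_univ_three, Pi.sub_apply,
    Pi.smul_apply, Pi.add_apply, smul_eq_mul]
  ring

theorem polarForm_id_cross {p : Vec → Vec} (hp : VPolyDeg 1 p) (x y : Vec) :
    polarForm (fun x => cross3 x (p x)) x y = (2⁻¹ : ℝ) • (x ⨯₃ p y + y ⨯₃ p x) := by
  simp only [polarForm, cross3_eq_crossProduct]
  rw [hp.apply_midpoint, midpoint_eq_smul_add, invOf_eq_inv]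
  simp only [map_smul, map_add, LinearMap.smul_apply, LinearMap.add_apply]
  module

theorem polarForm_id_cross_cyclic {p : Vec → Vec} (hp : VPolyDeg 1 p) (x y z : Vec) :
    2 * (polarForm (fun x => cross3 x (p x)) x y ⬝ᵥ (z - x) +
      polarForm (fun x => cross3 x (p x)) y z ⬝ᵥ (x - y) +
      polarForm (fun x => cross3 x (p x)) z x ⬝ᵥ (y - z)) =
      cross3 x (p x) ⬝ᵥ (y - x) + cross3 y (p y) ⬝ᵥ (z - y) + cross3 z (p z) ⬝ᵥ (x - z) := by
  simp only [hp.polarForm_id_cross]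
  simp only [← cross3_eq_crossProduct, cross3, dotProduct,
    Fin.sum_univ_three, Pi.sub_apply, Pi.smul_apply, Pi.add_apply, smul_eq_mul, Matrix.cons_val]
  ring

end VPolyDeg

namespace MemND

variable {k : ℕ} {w : Vec → Vec}

theorem polarForm_cyclic (hw : MemND 1 w) (x y z : Vec) :
    2 * (polarForm w x y ⬝ᵥ (z - x) + polarForm w y z ⬝ᵥ (x - y) + polarForm w z x ⬝ᵥ (y - z)) =
      w x ⬝ᵥ (y - x) + w y ⬝ᵥ (z - y) + w z ⬝ᵥ (x - z) := by
  obtain ⟨q, p, hq, hp, hw⟩ := hw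
  have hgrad := hq.vPolyDeg_grad3.polarForm_cyclic x y z
  have hcross := hp.polarForm_id_cross_cyclic x y z
  rw [show w = fun x => grad3 q x + cross3 x (p x) from funext hw]
  simp only [polarForm_add, add_dotProduct]
  linear_combination hgrad + hcross

theorem polarForm_dot_eq_zero (hk : k = 1 ∨ k = 2) (hw : MemND k w) {x : Fin 3 → Vec}
    (hvtx : ∀ m, w (x m) = 0) (hedge : ∀ m l, polarForm w (x m) (x l) ⬝ᵥ (x l - x m) = 0)
    (hconst : ∀ m, ∫ p in refTriangle, w (triangleMap x p) ⬝ᵥ (x m - x 0) = 0)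
    (hlin : 1 < k → ∫ p in refTriangle, w (triangleMap x p) ⬝ᵥ (triangleMap x p - x 0) = 0)
    (m l n : Fin 3) : polarForm w (x m) (x l) ⬝ᵥ (x n - x m) = 0 := by
  have hw₂ : VPolyDeg 2 w := hw.vPolyDeg_two (by omega)
  have hedge₀₁ := hedge 0 1
  have hedge₀₂ := hedge 0 2
  have hedge₁₂ := hedge 1 2
  obtain ⟨hg₁, hg₂⟩ := hw₂.polarForm_dot_eq_of_setIntegral_eq_zero hvtx hedge hconst
  have hg₀ : polarForm w (x 1) (x 2) ⬝ᵥ (x 0 - x 1) = 0 := by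
    rcases hk with rfl | rfl
    · have h := hw.polarForm_cyclic (x 0) (x 1) (x 2)
      rw [polarForm_comm w (x 2) (x 0)] at h
      simp only [hvtx, zero_dotProduct, dotProduct_sub] at h hedge₀₂ hg₁ hg₂ ⊢
      linarith
    · have h := hlin one_lt_two
      rw [hw₂.setIntegral_refTriangle_dot_sub hvtx hedge] at h
      linarith
  fin_cases m <;> fin_cases l <;> fin_cases n <;>
    simp only [Fin.zero_eta, Fin.mk_one, Fin.reduceFinMk, polarForm_self, hvtx, zero_dotProduct,
      polarForm_comm w (x 1) (x 0), polarForm_comm w (x 2) (x 0), polarForm_comm w (x 2) (x 1),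
      dotProduct_sub] at hedge₀₁ hedge₀₂ hedge₁₂ hg₀ hg₁ hg₂ ⊢ <;>
    linarith

end MemND

/-- Any three vertices of a tetrahedron lie on a common face. -/
theorem exists_succAbove_eq₃ (i j l : Fin 4) : ∃ (a : Fin 4) (m n o : Fin 3),
    a.succAbove m = i ∧ a.succAbove n = j ∧ a.succAbove o = l := by
  revert i j l
  decide

theorem MemND.eq_zero_of_edgeMoment_of_faceTanMoment {k : ℕ} (hk : k = 1 ∨ k = 2) {T : Tetra}
    {w : Vec → Vec} (hw : MemND k w)
    (hedge : ∀ i j, i ≠ j → ∀ q, PolyDeg k q → edgeMoment T i j w q = 0)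
    (hface : ∀ a q, MemRM k (T.outNormal a) q → faceTanMoment T a w q = 0) (x : Vec) :
    w x = 0 := by
  have hk₁ : 1 ≤ k := by omega
  refine Tetra.eq_zero_of_polarForm_vtx_eq_zero (T := T) (hw.vPolyDeg_two (by omega))
    (fun i j => Tetra.eq_zero_of_dot_vtx_sub_eq_zero (T := T) i fun l => ?_) x
  obtain ⟨a, m, n, o, rfl, rfl, rfl⟩ := exists_succAbove_eq₃ i j l
  exact hw.polarForm_dot_eq_zero hk (x := T.faceVtx a)
    (fun m => hw.apply_vtx_eq_zero hk₁ hedge _)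
    (fun m l => hw.polarForm_vtx_dot_eq_zero hk₁ hedge _ _)
    (fun m => Tetra.setIntegral_dot_eq_zero_of_faceTanMoment_cross_eq_zero
      (y := fun _ => T.faceVtx a m - T.faceVtx a 0) (fun _ => T.outNormal_dot_faceVtx_sub a m 0)
      (hface a _ (MemRM.cross_const k _ _)))
    (fun hk => Tetra.setIntegral_dot_eq_zero_of_faceTanMoment_cross_eq_zero
      (y := fun x => x - T.faceVtx a 0) (fun p => T.outNormal_dot_triangleMap_sub a p 0)
      (hface a _ (MemRM.cross_sub hk _ _))) m n o

theorem grad3_mul {f g : Vec → ℝ} {x : Vec} (hf : DifferentiableAt ℝ f x)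
    (hg : DifferentiableAt ℝ g x) :
    grad3 (fun y => f y * g y) x = g x • grad3 f x + f x • grad3 g x := by
  ext i
  simp only [grad3, pd_mul i hf hg, Pi.add_apply, Pi.smul_apply, smul_eq_mul, mul_comm]

theorem curl3_smul {f : Vec → ℝ} {v : Vec → Vec} {x : Vec} (hf : DifferentiableAt ℝ f x)
    (hv : ∀ i, DifferentiableAt ℝ (fun y => v y i) x) :
    curl3 (fun y => f y • v y) x = grad3 f x ⨯₃ v x + f x • curl3 v x := by
  simp only [curl3, Pi.smul_apply, smul_eq_mul, pd_mul _ hf (hv _), ← cross3_eq_crossProduct,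
    cross3, grad3]
  ext i
  fin_cases i <;>
    simp only [Fin.zero_eta, Fin.mk_one, Fin.reduceFinMk, Pi.add_apply, Pi.smul_apply,
      Matrix.cons_val, smul_eq_mul] <;>
    ring

theorem MemRT.const {n t : Vec} (ht : n ⬝ᵥ t = 0) : MemRT n fun _ => t :=
  ⟨t, 0, (dotProduct_comm t n).trans ht, fun x => by rw [zero_smul, add_zero]⟩

theorem MemRT.sub_proj {n : Vec} (hn : n ⬝ᵥ n = 1) (y : Vec) :
    MemRT n fun x => (x - y) - ((x - y) ⬝ᵥ n) • n := by
  refine ⟨-(y - (y ⬝ᵥ n) • n), 1, ?_, fun x => ?_⟩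
  · rw [dot3_eq_dotProduct, neg_dotProduct, sub_dotProduct, smul_dotProduct, hn, smul_eq_mul,
      mul_one, sub_self, neg_zero]
  · simp only [dot3_eq_dotProduct, sub_dotProduct]
    module

namespace VPolyDeg

variable {r : Vec → Vec}

theorem setIntegral_prod_refBary_mul_dot (hr : VPolyDeg 1 r) (x : Fin 3 → Vec) (t : Vec) :
    ∫ p in refTriangle, (∏ m, refBary p m) * (r (triangleMap x p) ⬝ᵥ t) =
      (∑ m, r (x m)) ⬝ᵥ t / 360 := by
  have h := setIntegral_refTriangle_sum_prod_refBary_pow (fun m => r (x m) ⬝ᵥ t)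
    ![![2, 1, 1], ![1, 2, 1], ![1, 1, 2]]
  simp only [Fin.sum_univ_three, Fin.prod_univ_three, Matrix.cons_val, pow_one] at h
  simp only [triangleMap_apply, hr.apply_sum_smul x (sum_refBary _)]
  simp only [Fin.sum_univ_three, Fin.prod_univ_three, add_dotProduct, smul_dotProduct, smul_eq_mul]
  convert h using 1
  · congr 1 with p
    ring
  · norm_num [Nat.factorial]
    ring

theorem setIntegral_prod_refBary_mul_dot_sub (hr : VPolyDeg 1 r) (x : Fin 3 → Vec) (y : Vec) :
    ∫ p in refTriangle, (∏ m, refBary p m) * (r (triangleMap x p) ⬝ᵥ (triangleMap x p - y)) =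
      (2 * (∑ m, r (x m)) ⬝ᵥ (∑ m, (x m - y)) + ∑ m, r (x m) ⬝ᵥ (x m - y)) / 2520 := by
  have h := setIntegral_refTriangle_sum_prod_refBary_pow
    (fun m : Fin 3 × Fin 3 => r (x m.1) ⬝ᵥ (x m.2 - y))
    (fun m => ![![![3, 1, 1], ![2, 2, 1], ![2, 1, 2]], ![![2, 2, 1], ![1, 3, 1], ![1, 2, 2]],
      ![![2, 1, 2], ![1, 2, 2], ![1, 1, 3]]] m.1 m.2)
  simp only [Fintype.sum_prod_type, Fin.sum_univ_three, Fin.prod_univ_three, Matrix.cons_val,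
    pow_one] at h
  simp only [triangleMap_sub]
  simp only [triangleMap_apply, hr.apply_sum_smul x (sum_refBary _)]
  simp only [Fin.sum_univ_three, Fin.prod_univ_three, add_dotProduct, smul_dotProduct,
    dotProduct_add, dotProduct_smul, smul_eq_mul]
  convert h using 1
  · congr 1 with p
    ring
  · norm_num [Nat.factorial]
    ring

end VPolyDeg

/-- Every `D a` with `a ≠ i` equals the total sum `S`, so `S = n * S`. -/
theorem eq_zero_of_sum_succAbove_eq_zero {R : Type*} [CommRing R] [NoZeroDivisors R]
    [CharZero R] {n : ℕ} (hn : n ≠ 1) {D : Fin (n + 1) → R}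
    {i : Fin (n + 1)} (hi : D i = 0) (hD : ∀ a, a ≠ i → ∑ m, D (a.succAbove m) = 0)
    (a : Fin (n + 1)) : D a = 0 := by
  have hsum (a : Fin (n + 1)) (ha : a ≠ i) : D a = ∑ j, D j := by
    rw [Fin.sum_univ_succAbove D a, hD a ha, add_zero]
  have htotal : ∑ j, D j = n * ∑ j, D j := by
    conv_lhs => rw [Fin.sum_univ_succAbove D i, hi, zero_add]
    simp only [hsum _ (Fin.succAbove_ne i _), Finset.sum_const, Finset.card_univ, Fintype.card_fin,
      nsmul_eq_mul]
  rcases eq_or_ne a i with rfl | ha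
  · exact hi
  · rw [hsum a ha]
    have hn' : (n : R) - 1 ≠ 0 := sub_ne_zero.2 (Nat.cast_ne_one.2 hn)
    exact (mul_eq_zero_iff_left hn').1 (by linear_combination -htotal)

namespace Tetra

variable {T : Tetra} {lam : Fin 4 → Vec → ℝ} {r : Vec → Vec}

theorem IsBary.curl3_bubble_triangleMap (hlam : T.IsBary lam) (hr : VPolyDeg 1 r) (a : Fin 4)
    (p : ℝ × ℝ) :
    curl3 (fun x => (∏ i, lam i x) • r x) (triangleMap (T.faceVtx a) p) =
      (∏ m, refBary p m) • (grad3 (lam a) (triangleMap (T.faceVtx a) p) ⨯₃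
        r (triangleMap (T.faceVtx a) p)) := by
  have hdiff := (hlam.1 a).differentiable
  have hprod : Differentiable ℝ fun x => ∏ m, lam (a.succAbove m) x :=
    fun y => (HasFDerivAt.finsetProd fun m _ =>
      ((hlam.1 (a.succAbove m)).differentiable y).hasFDerivAt).differentiableAt
  simp only [Fin.prod_univ_succAbove _ a]
  rw [curl3_smul ((hdiff _).fun_mul (hprod _)) fun i => (hr i).differentiable _,
    grad3_mul (hdiff _) (hprod _)]
  simp only [hlam.apply_triangleMap_self, hlam.apply_triangleMap_succAbove, zero_mul, zero_smul,
    add_zero, map_smul, LinearMap.smul_apply]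

theorem IsBary.setIntegral_prod_refBary_mul_dot_eq_zero (hlam : T.IsBary lam) (hr : VPolyDeg 1 r)
    {a : Fin 4} {q : Vec → Vec}
    (hq : ∀ p, T.outNormal a ⬝ᵥ q (triangleMap (T.faceVtx a) p) = 0)
    (h : faceTanMoment T a (curl3 fun x => (∏ i, lam i x) • r x) q = 0) :
    ∫ p in refTriangle, (∏ m, refBary p m) *
      (r (triangleMap (T.faceVtx a) p) ⬝ᵥ q (triangleMap (T.faceVtx a) p)) = 0 := by
  obtain ⟨c, hc, hmoment⟩ := T.exists_faceTanMoment_eq_mul_setIntegral a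
  obtain ⟨s, hs, hgrad⟩ := hlam.exists_grad3_eq_smul_outNormal a
  have hcross {y : Vec} (hy : T.outNormal a ⬝ᵥ y = 0) (z : Vec) :
      ((T.outNormal a ⨯₃ z) ⨯₃ T.outNormal a) ⬝ᵥ y = z ⬝ᵥ y := by
    rw [dotProduct_comm, triple_product_permutation, cross_dot_cross, outNormal_dot_self, hy,
      one_mul, zero_mul, sub_zero]
  simp only [hmoment, mul_eq_zero, hc, false_or, hlam.curl3_bubble_triangleMap hr, hgrad, map_smul,
    LinearMap.smul_apply, smul_dotProduct, hcross (hq _), smul_eq_mul, mul_left_comm _ s,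
    integral_const_mul, hs] at h
  exact h

theorem IsBary.sum_dot_faceVtx_sub_eq_zero (hlam : T.IsBary lam) (hr : VPolyDeg 1 r) {a : Fin 4}
    (h : ∀ q, MemRT (T.outNormal a) q →
      faceTanMoment T a (curl3 fun x => (∏ i, lam i x) • r x) q = 0) (l : Fin 3) :
    ∑ m, r (T.faceVtx a m) ⬝ᵥ (T.faceVtx a m - T.faceVtx a l) = 0 := by
  have hconst (m : Fin 3) :
      (∑ m, r (T.faceVtx a m)) ⬝ᵥ (T.faceVtx a m - T.faceVtx a l) = 0 := by
    have ht := T.outNormal_dot_faceVtx_sub a m l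
    have hint := hlam.setIntegral_prod_refBary_mul_dot_eq_zero hr (fun _ => ht)
      (h _ (MemRT.const ht))
    rw [hr.setIntegral_prod_refBary_mul_dot] at hint
    linarith
  have hproj (p : ℝ × ℝ) := T.outNormal_dot_triangleMap_sub a p l
  have hint := hlam.setIntegral_prod_refBary_mul_dot_eq_zero hr (fun p => by
    rw [dotProduct_comm _ (T.outNormal a), hproj, zero_smul, sub_zero, hproj])
    (h _ (MemRT.sub_proj (T.outNormal_dot_self a) (T.faceVtx a l)))
  simp only [dotProduct_comm _ (T.outNormal a), hproj, zero_smul, sub_zero,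
    hr.setIntegral_prod_refBary_mul_dot_sub] at hint
  simp only [dotProduct_sum, hconst, Finset.sum_const_zero, mul_zero, zero_add] at hint
  linarith

theorem IsBary.eq_zero_of_faceTanMoment_curl3_bubble (hlam : T.IsBary lam) (hr : VPolyDeg 1 r)
    (h : ∀ a q, MemRT (T.outNormal a) q →
      faceTanMoment T a (curl3 fun x => (∏ i, lam i x) • r x) q = 0) (x : Vec) : r x = 0 := by
  refine eq_zero_of_apply_vtx_eq_zero (T := T) hr
    (fun a => eq_zero_of_dot_vtx_sub_eq_zero (T := T) a fun i => ?_) x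
  rw [← neg_sub, dotProduct_neg, neg_eq_zero]
  refine eq_zero_of_sum_succAbove_eq_zero (D := fun j => r (T.vtx j) ⬝ᵥ (T.vtx j - T.vtx i))
    (i := i) (by norm_num) (by simp only [sub_self, dotProduct_zero]) (fun a ha => ?_) a
  obtain ⟨l, rfl⟩ := Fin.exists_succAbove_eq ha.symm
  exact hlam.sum_dot_faceVtx_sub_eq_zero hr (h a) l

theorem edge_subset_face {i j a : Fin 4} (hi : i ≠ a) (hj : j ≠ a) : T.edge i j ⊆ T.face a :=
  segment_subset_convexHull (Set.mem_image_of_mem _ hi) (Set.mem_image_of_mem _ hj)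

theorem IsBary.prod_eq_zero_of_mem_face (hlam : T.IsBary lam) {a : Fin 4} {x : Vec}
    (hx : x ∈ T.face a) : ∏ i, lam i x = 0 := by
  rw [face_eq_image_triangleMap] at hx
  obtain ⟨p, -, rfl⟩ := hx
  exact Finset.prod_eq_zero (Finset.mem_univ a) (hlam.apply_triangleMap_self a p)

theorem edgeMoment_congr {i j : Fin 4} {v w : Vec → Vec} (h : Set.EqOn v w (T.edge i j))
    (q : Vec → ℝ) : edgeMoment T i j v q = edgeMoment T i j w q := by
  have hmeas : MeasurableSet (T.edge i j) := by
    rw [edge, ← convexHull_pair]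
    exact ((Set.toFinite _).isCompact_convexHull ℝ).measurableSet
  exact setIntegral_congr_fun hmeas fun x hx => by rw [h hx]

theorem faceTanMoment_congr {a : Fin 4} {v w : Vec → Vec} (h : Set.EqOn v w (T.face a))
    (q : Vec → Vec) : faceTanMoment T a v q = faceTanMoment T a w q :=
  setIntegral_congr_fun ((Set.toFinite _).isCompact_convexHull ℝ).measurableSet
    fun x hx => by rw [h hx]

end Tetra

/-- Unisolvence of the DoFs (2.1)-(2.3) for `W_k(K)`, `k = 1,2`:
if `v ∈ W_k(K)` and all the edge moments against `P_k(e)`, tangential face moments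
against `RM_{k-2}(F)`, and curl-trace face moments against `RT(F)` vanish, then `v = 0`. -/
theorem statement3 (k : ℕ) (hk : k = 1 ∨ k = 2) (T : Tetra) (v : Vec → Vec)
    (hv : MemW k T v)
    (hedge : ∀ a b : Fin 4, a ≠ b → ∀ q, PolyDeg k q → edgeMoment T a b v q = 0)
    (hfaceRM : ∀ a : Fin 4, ∀ q, MemRM k (T.outNormal a) q → faceTanMoment T a v q = 0)
    (hfaceRT : ∀ a : Fin 4, ∀ q, MemRT (T.outNormal a) q →
      faceTanMoment T a (curl3 v) q = 0) :
    ∀ x ∈ T.K, v x = 0 := by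
  obtain ⟨q, p, r, b, ⟨lam, hlam, hb⟩, hq, hp, hr, hv⟩ := hv
  set w : Vec → Vec := fun x => grad3 q x + cross3 x (p x)
  have hface (a : Fin 4) : Set.EqOn v w (T.face a) := fun x hx => by
    rw [hv, hb, hlam.prod_eq_zero_of_mem_face hx, zero_smul, add_zero]
  have hedge' (i j : Fin 4) : Set.EqOn v w (T.edge i j) := by
    obtain ⟨a, hi, hj⟩ : ∃ a, i ≠ a ∧ j ≠ a := by revert i j; decide
    exact (hface a).mono (Tetra.edge_subset_face hi hj)
  have hwzero : ∀ x, w x = 0 := MemND.eq_zero_of_edgeMoment_of_faceTanMoment hk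
    ⟨q, p, hq, hp, fun _ => rfl⟩
    (fun i j hij q hq => Tetra.edgeMoment_congr (hedge' i j) q ▸ hedge i j hij q hq)
    (fun a q hq => Tetra.faceTanMoment_congr (hface a) q ▸ hfaceRM a q hq)
  have hbubble : v = fun x => (∏ i, lam i x) • r x :=
    funext fun x => by
      rw [hv, hb, show grad3 q x + cross3 x (p x) = 0 from hwzero x, zero_add]
  intro x _
  rw [hbubble] at hfaceRT ⊢
  beta_reduce
  rw [hlam.eq_zero_of_faceTanMoment_curl3_bubble hr hfaceRT, smul_zero]
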